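/- arXiv:2107.03855 — 8 statements merged into one kernel-verified Lean document; each statement's English description precedes it below -/
import Mathlib

section
/- There exist a positive integer γ and a positive real x₀ such that for all real numbers x and q satisfying x ≥ x₀ and x^{1/5} < q ≤ x^{1/4}, one has #{a : √x/q < a ≤ √(x/q), P(a) ≤ q, and S(a) ≤ 2^γ √x / q} ≥ √x / (2^γ q log x). -/
/-- `Pmax n` is the largest prime factor of `n`, with the convention `Pmax 1 = 1`. -/
def Pmax (n : ℕ) : ℕ := if n ≤ 1 then 1 else n.primeFactors.sup id

/-- The Schinzel–Szekeres function: if `n = p₁ p₂ ⋯ p_Ω` with `p₁ ≥ p₂ ≥ ⋯ ≥ p_Ω` prime,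
`SS n = max_{1 ≤ k ≤ Ω} p₁ ⋯ p_{k-1} p_k²`, and `SS 1 = 1`.
(`Nat.primeFactorsList n` is the *increasing* list of prime factors with multiplicity;
the value produced for the index `j` is the one for `k = Ω - j`.) -/
def SS (n : ℕ) : ℕ :=
  ((List.range n.primeFactorsList.length).map
    (fun j => (n.primeFactorsList.drop j).headI * (n.primeFactorsList.drop j).prod)).foldr max 1

/-- A chain in the divisor graph: a finite sequence of pairwise distinct positive
integers in which any two consecutive terms are adjacent in the divisor graph
(the smaller divides the larger). -/
def IsDivChain (l : List ℕ) : Prop :=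
  l.Nodup ∧ (∀ n ∈ l, 0 < n) ∧ l.Chain' (fun a b => a ∣ b ∨ b ∣ a)

section Helpers
open Finset


noncomputable def HH (n : ℕ) : ℝ := ∑ p ∈ (range n).filter Nat.Prime, Real.log p / (p + 1)
noncomputable def ZZ (n : ℕ) : ℝ := ∏ p ∈ (range n).filter Nat.Prime, (1 + 1 / (p : ℝ))

lemma HH_succ (n : ℕ) : HH (n+1) = HH n + if n.Prime then Real.log n / (n + 1) else 0 := by
  unfold HH
  rw [range_add_one, filter_insert]
  split_ifs with h
  · rw [sum_insert (by simp), add_comm]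
  · simp

lemma ZZ_succ (n : ℕ) : ZZ (n+1) = ZZ n * if n.Prime then (1 + 1 / (n : ℝ)) else 1 := by
  unfold ZZ
  rw [range_add_one, filter_insert]
  split_ifs with h
  · rw [prod_insert (by simp), mul_comm]
  · simp

lemma ZZ_pos (n : ℕ) : 0 < ZZ n := by
  unfold ZZ
  apply prod_pos
  intros; positivity

lemma log_fact (n : ℕ) : Real.log (n.factorial) =
    ∑ p ∈ (range (n+1)).filter Nat.Prime, (n.factorial.factorization p) * Real.log p := by
  conv_lhs => rw [← Nat.prod_factorization_pow_eq_self (Nat.factorial_ne_zero n)]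
  rw [Nat.prod_factorization_eq_prod_primeFactors, Nat.cast_prod, Real.log_prod]
  · have : n.factorial.primeFactors = (range (n+1)).filter Nat.Prime := by
      ext p
      simp only [Nat.mem_primeFactors, mem_filter, mem_range]
      constructor
      · rintro ⟨hp, h, -⟩
        exact ⟨by have := (hp.dvd_factorial).1 h; omega, hp⟩
      · rintro ⟨h, hp⟩
        exact ⟨hp, (hp.dvd_factorial).2 (by omega), Nat.factorial_ne_zero n⟩
    rw [this]
    apply sum_congr rfl
    intro p hp
    push_cast
    rw [Real.log_pow]
  · intro p hp
    have := (Nat.prime_of_mem_primeFactors hp).pos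
    positivity

lemma fact_val_upper (n p : ℕ) (hp : p.Prime) :
    (n.factorial.factorization p : ℝ) ≤ n / (p - 1) := by
  have h1 : (1:ℝ) < p := by exact_mod_cast hp.one_lt
  have := Fact.mk hp
  have h := sub_one_mul_padicValNat_factorial (p := p) n
  rw [Nat.factorization_def _ hp, le_div_iff₀ (by linarith)]
  have h2 : (p - 1) * padicValNat p n.factorial ≤ n := by omega
  have h3 : (((p - 1 : ℕ) : ℝ)) * padicValNat p n.factorial ≤ n := by exact_mod_cast h2
  rw [Nat.cast_sub hp.pos] at h3
  push_cast at h3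
  linarith

lemma fact_val_lower (n p : ℕ) (hp : p.Prime) :
    (n : ℝ) / p - 1 ≤ (n.factorial.factorization p : ℝ) := by
  have h1 : (1:ℝ) < p := by exact_mod_cast hp.one_lt
  have h : n / p ≤ n.factorial.factorization p := by
    rw [← Nat.Prime.pow_dvd_iff_le_factorization hp (Nat.factorial_ne_zero n)]
    have a1 : p ^ (n/p) ∣ (p * (n/p)).factorial := by
      rw [Nat.Prime.pow_dvd_iff_le_factorization hp (Nat.factorial_ne_zero _)]
      have := Fact.mk hp
      rw [Nat.factorization_def _ hp, padicValNat_factorial_mul]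
      omega
    exact a1.trans (Nat.factorial_dvd_factorial (Nat.mul_div_le n p))
  have h2 : ((n / p : ℕ) : ℝ) ≤ n.factorial.factorization p := by exact_mod_cast h
  have h3 := Nat.lt_floor_add_one ((n:ℝ)/p)
  rw [Nat.floor_div_eq_div] at h3
  linarith

lemma log_fact_lower (n : ℕ) : n * Real.log n - n ≤ Real.log n.factorial := by
  induction n with
  | zero => simp
  | succ k ih =>
    rcases Nat.eq_zero_or_pos k with rfl | hk
    · simp
    have hk' : (0:ℝ) < k := by exact_mod_cast hk
    rw [Nat.factorial_succ]
    push_cast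
    rw [Real.log_mul (by positivity) (by positivity)]
    have : Real.log ((k+1)/k) ≤ 1/k := by
      have := Real.log_le_sub_one_of_pos (show (0:ℝ) < (k+1)/k by positivity)
      have e : ((k:ℝ)+1)/k - 1 = 1/k := by field_simp; ring
      linarith
    rw [Real.log_div (by positivity) (by positivity)] at this
    have h2 : k * (Real.log (k+1) - Real.log k) ≤ 1 := by
      calc _ ≤ k * (1/(k:ℝ)) := by gcongr
        _ = 1 := by field_simp
    linarith

lemma log_fact_upper (n : ℕ) : Real.log n.factorial ≤ n * Real.log n := by
  rw [← Real.log_pow]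
  apply Real.log_le_log (by positivity)
  exact_mod_cast Nat.factorial_le_pow n

lemma mertens_lower (n : ℕ) (hn : 1 ≤ n) :
    Real.log n - 1 ≤ ∑ p ∈ (range (n+1)).filter Nat.Prime, Real.log p / (p - 1) := by
  have hn' : (0:ℝ) < n := by exact_mod_cast hn
  have h := log_fact_lower n
  rw [log_fact] at h
  have h2 : ∑ p ∈ (range (n+1)).filter Nat.Prime, (n.factorial.factorization p) * Real.log p ≤
     n * ∑ p ∈ (range (n+1)).filter Nat.Prime, Real.log p / (p - 1) := by
    rw [mul_sum]
    apply sum_le_sum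
    intro p hp
    have hp' := (mem_filter.1 hp).2
    calc _ ≤ (n / ((p:ℝ) - 1)) * Real.log p := by
            have := fact_val_upper n p hp'
            have := Real.log_natCast_nonneg p
            gcongr
      _ = _ := by ring
  have : n * (Real.log n - 1) ≤ n * ∑ p ∈ (range (n+1)).filter Nat.Prime, Real.log p / (p - 1) := by
    linarith
  exact le_of_mul_le_mul_left this hn'

lemma mertens_upper (n : ℕ) (hn : 1 ≤ n) :
    ∑ p ∈ (range (n+1)).filter Nat.Prime, Real.log p / p ≤ Real.log n + Real.log 4 := by
  have hn' : (0:ℝ) < n := by exact_mod_cast hn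
  have h := log_fact_upper n
  rw [log_fact] at h
  have ht := Chebyshev.theta_le_log4_mul_x (x := n) (by positivity)
  rw [Chebyshev.theta_eq_sum_Icc] at ht
  have e : (Icc 0 ⌊(n:ℝ)⌋₊).filter Nat.Prime = (range (n+1)).filter Nat.Prime := by
    ext p; simp
  rw [e] at ht
  have h2 : n * ∑ p ∈ (range (n+1)).filter Nat.Prime, Real.log p / p -
      ∑ p ∈ (range (n+1)).filter Nat.Prime, Real.log p ≤
      ∑ p ∈ (range (n+1)).filter Nat.Prime, (n.factorial.factorization p) * Real.log p := by
    rw [mul_sum, ← sum_sub_distrib]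
    apply sum_le_sum
    intro p hp
    have hp' := (mem_filter.1 hp).2
    calc _ = (n / (p:ℝ) - 1) * Real.log p := by ring
      _ ≤ _ := by
            have := fact_val_lower n p hp'
            have := Real.log_natCast_nonneg p
            gcongr
  have : n * ∑ p ∈ (range (n+1)).filter Nat.Prime, Real.log p / p ≤ n * (Real.log n + Real.log 4) := by
    linarith
  exact le_of_mul_le_mul_left this hn'

lemma HH_bound : ∃ C : ℝ, 1 ≤ C ∧ ∀ n : ℕ, 1 ≤ n → |HH n - Real.log n| ≤ C := by
  have hs : Summable (fun n : ℕ => 1 / (n:ℝ)^(3/2:ℝ)) := Real.summable_one_div_nat_rpow.2 (by norm_num)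
  set K := ∑' n : ℕ, 1 / (n:ℝ)^(3/2:ℝ)
  have hK : 0 ≤ K := tsum_nonneg (fun n => by positivity)
  have h4 : 0 ≤ Real.log 4 := Real.log_nonneg (by norm_num)
  refine ⟨1 + Real.log 4 + 8 * K + 1, by linarith, ?_⟩
  intro n hn
  have up : HH n ≤ Real.log n + Real.log 4 := by
    refine le_trans ?_ (mertens_upper n hn)
    unfold HH
    calc _ ≤ ∑ p ∈ (range n).filter Nat.Prime, Real.log p / p := by
          apply sum_le_sum
          intro p hp
          have := (mem_filter.1 hp).2.pos
          have := Real.log_natCast_nonneg p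
          gcongr
          linarith
      _ ≤ _ := by
          apply sum_le_sum_of_subset_of_nonneg
          · apply filter_subset_filter; apply range_subset_range.2; omega
          · intro p _ _
            have := Real.log_natCast_nonneg p
            positivity
  have lo : Real.log n - 1 ≤ HH n + 8 * K + 1 := by
    refine (mertens_lower n hn).trans ?_
    have e1 : ∑ p ∈ (range (n+1)).filter Nat.Prime, Real.log p / (p - 1) ≤ HH (n+1) + 8 * K := by
      have : 8 * K ≥ ∑ p ∈ (range (n+1)).filter Nat.Prime, 8 * (1 / (p:ℝ)^(3/2:ℝ)) := by
        rw [← mul_sum]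
        gcongr
        exact hs.sum_le_tsum _ (fun i _ => by positivity)
      refine le_trans ?_ (add_le_add le_rfl this)
      unfold HH
      rw [← sum_add_distrib]
      apply sum_le_sum
      intro p hp
      have hp2 : (2:ℝ) ≤ p := by exact_mod_cast (mem_filter.1 hp).2.two_le
      have hp0 : (0:ℝ) < p := by linarith
      have l := Real.log_le_rpow_div (x := p) (by positivity) (show (0:ℝ) < 1/2 by norm_num)
      have e : (p:ℝ)^(3/2:ℝ) = p^2 / p^(1/2:ℝ) := by
        rw [← Real.rpow_natCast, ← Real.rpow_sub hp0]; norm_num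
      rw [e]
      set r := (p:ℝ)^(1/2:ℝ)
      have hr : 0 < r := by positivity
      have : Real.log p / (p-1) = Real.log p / (p+1) + Real.log p * (2 / (p^2-1)) := by
        have : (p:ℝ)^2 - 1 ≠ 0 := by nlinarith
        have : (p:ℝ) - 1 ≠ 0 := by linarith
        have e : (p:ℝ)^2 - 1 = (p-1)*(p+1) := by ring
        rw [e]
        field_simp
        ring
      rw [this]
      refine add_le_add le_rfl ?_
      have l' : Real.log p ≤ 2 * r := by linarith
      have m : 2 / ((p:ℝ)^2-1) ≤ 4 / p^2 := by
        rw [div_le_div_iff₀ (by nlinarith) (by positivity)]; nlinarith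
      have m0 : 0 ≤ 2 / ((p:ℝ)^2-1) := div_nonneg (by norm_num) (by nlinarith)
      calc _ ≤ 2 * r * (4 / p^2) := by gcongr
        _ = _ := by field_simp; norm_num
    have e2 : HH (n+1) ≤ HH n + 1 := by
      rw [HH_succ]
      split_ifs
      · have : Real.log n / (n+1) ≤ 1 := by
          rw [div_le_one (by positivity)]
          have := Real.log_le_self (x := n) (by positivity)
          linarith
        linarith
      · linarith
    linarith
  rw [abs_le]
  constructor <;> linarith

lemma ZZ_lower (n : ℕ) (hn : 1 ≤ n) : Real.log n / 2 ≤ ZZ n := by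
  let f : ℕ →* ℝ := { toFun := fun m => (m:ℝ)⁻¹, map_one' := by simp, map_mul' := by intros; simp [mul_comm] }
  obtain ⟨h1, h2⟩ := EulerProduct.summable_and_hasSum_smoothNumbers_prod_primesBelow_geometric (f := f)
    (by intro p hp
        have : (1:ℝ) < p := by exact_mod_cast hp.one_lt
        simp [f]
        exact inv_lt_one_of_one_lt₀ this) n
  have a1 : Real.log n ≤ ∏ p ∈ n.primesBelow, (1 - f p)⁻¹ := by
    have s : Real.log n ≤ ∑ m ∈ Ico 1 n, (m:ℝ)⁻¹ := by
      clear h1 h2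
      induction n, hn using Nat.le_induction with
      | base => simp
      | succ k hk ih =>
        rw [sum_Ico_succ_top hk]
        have hk' : (0:ℝ) < k := by exact_mod_cast hk
        have := Real.log_le_sub_one_of_pos (show (0:ℝ) < (k+1)/k by positivity)
        have e : ((k:ℝ)+1)/k - 1 = (k:ℝ)⁻¹ := by field_simp; ring
        rw [Real.log_div (by positivity) (by positivity)] at this
        push_cast
        linarith
    refine s.trans ?_
    have key : ∑ m ∈ (Ico 1 n).attach, (m.1:ℝ)⁻¹ ≤ ∏ p ∈ n.primesBelow, (1 - f p)⁻¹ := by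
      have inj : Function.Injective (fun m : {x // x ∈ Ico 1 n} => (⟨m.1, by
          have := mem_Ico.1 m.2
          rw [Nat.mem_smoothNumbers']
          intro p hp hd
          exact lt_of_le_of_lt (Nat.le_of_dvd (by omega) hd) this.2⟩ : n.smoothNumbers)) := by
        intro a b h
        exact Subtype.ext (congrArg (fun z : n.smoothNumbers => z.1) h)
      have := h2.summable.sum_le_tsum ((Ico 1 n).attach.map ⟨_, inj⟩) (fun i _ => by simp [f])
      rw [h2.tsum_eq, sum_map] at this
      exact this
    rw [sum_attach (Ico 1 n) (fun m => (m:ℝ)⁻¹)] at key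
    exact key
  have a2 : (1/2:ℝ) ≤ ∏ p ∈ n.primesBelow, (1 - 1/(p:ℝ)^2) := by
    have b1 : ∀ k : ℕ, 1 ≤ k → (1/2:ℝ) * (1 + 1/k) ≤ ∏ p ∈ (range (k+1)).filter Nat.Prime, (1 - 1/(p:ℝ)^2) := by
      intro k hk
      induction k, hk using Nat.le_induction with
      | base =>
        have : (range (1+1)).filter Nat.Prime = ∅ := by decide
        rw [this]; norm_num
      | succ k hk ih =>
        have hk' : (0:ℝ) < k := by exact_mod_cast hk
        rw [range_add_one (n := k+1), filter_insert]
        split_ifs with hp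
        · rw [prod_insert (by simp)]
          push_cast
          calc (1/2:ℝ) * (1 + 1/((k:ℝ)+1)) = (1 - 1/((k:ℝ)+1)^2) * ((1/2:ℝ) * (1 + 1/k)) := by
                field_simp; ring
            _ ≤ _ := by
              have : 1/((k:ℝ)+1)^2 ≤ 1 := by rw [div_le_one (by positivity)]; nlinarith
              have : 0 ≤ 1 - 1/((k:ℝ)+1)^2 := by linarith
              gcongr
        · refine le_trans ?_ ih
          push_cast
          gcongr
          linarith
    obtain ⟨k, rfl⟩ : ∃ k, n = k + 1 := ⟨n-1, by omega⟩
    rcases Nat.eq_zero_or_pos k with rfl | hk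
    · have : (0+1).primesBelow = ∅ := by decide
      rw [this]; norm_num
    · refine le_trans ?_ (b1 k hk)
      have : (0:ℝ) ≤ 1/k := by positivity
      linarith
  have a3 : ZZ n = (∏ p ∈ n.primesBelow, (1 - f p)⁻¹) * ∏ p ∈ n.primesBelow, (1 - 1/(p:ℝ)^2) := by
    rw [← prod_mul_distrib]
    unfold ZZ
    apply prod_congr rfl
    intro p hp
    have hp' : (1:ℝ) < p := by exact_mod_cast (mem_filter.1 hp).2.one_lt
    have : (1:ℝ) - (p:ℝ)⁻¹ ≠ 0 := by
      have := inv_lt_one_of_one_lt₀ hp'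
      linarith
    simp only [f, MonoidHom.coe_mk, OneHom.coe_mk]
    rw [eq_comm, inv_mul_eq_iff_eq_mul₀ this]
    field_simp
    ring
  rw [a3]
  have : 0 ≤ Real.log n := Real.log_natCast_nonneg n
  calc Real.log n / 2 = Real.log n * (1/2) := by ring
    _ ≤ _ := by
      apply mul_le_mul a1 a2 (by norm_num) (this.trans a1)


/-- one step of the process: survivors at stage `n` -/
def stepSurv (t n : ℕ) (A : Finset ℕ) : Finset ℕ := A.filter (fun a => n ≤ t * a)

/-- the dense squarefree numbers built from primes `< n` that are alive at `n` -/
def AA (t : ℕ) : ℕ → Finset ℕ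
  | 0 => {1}
  | n + 1 => if n.Prime then stepSurv t n (AA t n) ∪ (stepSurv t n (AA t n)).image (fun a => a * n)
      else stepSurv t n (AA t n)

lemma AA_succ (t n : ℕ) : AA t (n+1) = if n.Prime then
    stepSurv t n (AA t n) ∪ (stepSurv t n (AA t n)).image (fun a => a * n)
      else stepSurv t n (AA t n) := rfl

lemma mem_stepSurv {t n a : ℕ} {A : Finset ℕ} : a ∈ stepSurv t n A ↔ a ∈ A ∧ n ≤ t * a := by
  simp [stepSurv]

lemma AA_pos {t n a : ℕ} (ha : a ∈ AA t n) : 0 < a := by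
  induction n generalizing a with
  | zero => simp [AA] at ha; omega
  | succ n ih =>
    rw [AA_succ] at ha
    split_ifs at ha with hp
    · rw [mem_union, mem_image] at ha
      rcases ha with ha | ⟨b, hb, rfl⟩
      · exact ih (mem_stepSurv.1 ha).1
      · exact Nat.mul_pos (ih (mem_stepSurv.1 hb).1) hp.pos
    · exact ih (mem_stepSurv.1 ha).1

lemma AA_primes {t n a p : ℕ} (ha : a ∈ AA t n) (hp : p.Prime) (hd : p ∣ a) : p < n := by
  induction n generalizing a with
  | zero => simp [AA] at ha; subst ha; exact absurd (Nat.dvd_one.1 hd) hp.ne_one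
  | succ n ih =>
    rw [AA_succ] at ha
    split_ifs at ha with hn
    · rw [mem_union, mem_image] at ha
      rcases ha with ha | ⟨b, hb, rfl⟩
      · have := ih (mem_stepSurv.1 ha).1 hd; omega
      · rcases (hp.dvd_mul).1 hd with h | h
        · have := ih (mem_stepSurv.1 hb).1 h; omega
        · have := (Nat.prime_dvd_prime_iff_eq hp hn).1 h; omega
    · have := ih (mem_stepSurv.1 ha).1 hd; omega

lemma AA_alive {t n a : ℕ} (ha : a ∈ AA t n) : n ≤ t * a + 1 := by
  cases n with
  | zero => omega
  | succ n =>
    rw [AA_succ] at ha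
    split_ifs at ha with hn
    · rw [mem_union, mem_image] at ha
      rcases ha with ha | ⟨b, hb, rfl⟩
      · have := (mem_stepSurv.1 ha).2; omega
      · have h1 := (mem_stepSurv.1 hb).2
        have : t * b * 1 ≤ t * b * n := Nat.mul_le_mul_left _ hn.one_le
        rw [← mul_assoc]; omega
    · have := (mem_stepSurv.1 ha).2; omega

lemma SS_mul {a p : ℕ} (ha : 0 < a) (hp : p.Prime) (h : ∀ r, r.Prime → r ∣ a → r ≤ p) :
    SS (a * p) ≤ max (p * SS a) (p * p) := by
  have hl : (a * p).primeFactorsList = a.primeFactorsList ++ [p] := by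
    have h1 : (a*p).primeFactorsList.Perm (a.primeFactorsList ++ [p]) := by
      have := Nat.perm_primeFactorsList_mul ha.ne' hp.pos.ne'
      rwa [Nat.primeFactorsList_prime hp] at this
    refine h1.eq_of_pairwise (le := (· ≤ ·)) ?_ (Nat.primeFactorsList_sorted _).pairwise ?_
    · intro a b _ _ h1 h2; omega
    · rw [List.pairwise_append]
      refine ⟨(Nat.primeFactorsList_sorted _).pairwise, by simp, ?_⟩
      intro r hr b hb
      rw [List.mem_singleton] at hb
      subst hb
      exact h r (Nat.prime_of_mem_primeFactorsList hr) (Nat.dvd_of_mem_primeFactorsList hr)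
  have foldle : ∀ (l : List ℕ) (B : ℕ), 1 ≤ B → (∀ x ∈ l, x ≤ B) → l.foldr max 1 ≤ B := by
    intro l B hB hx
    induction l with
    | nil => simpa
    | cons y l ih =>
      simp only [List.foldr_cons]
      apply max_le (hx y (by simp))
      exact ih (fun x hx' => hx x (by simp [hx']))
  have lefold : ∀ (l : List ℕ) (x : ℕ), x ∈ l → x ≤ l.foldr max 1 := by
    intro l x hx
    induction l with
    | nil => simp at hx
    | cons y l ih =>
      simp only [List.foldr_cons]
      rcases List.mem_cons.1 hx with rfl | hx
      · exact le_max_left _ _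
      · exact (ih hx).trans (le_max_right _ _)
  unfold SS
  rw [hl]
  apply foldle
  · have : 1 ≤ p * p := Nat.mul_pos hp.pos hp.pos
    exact this.trans (le_max_right _ _)
  · intro x hx
    rw [List.mem_map] at hx
    obtain ⟨j, hj, rfl⟩ := hx
    rw [List.mem_range, List.length_append, List.length_singleton] at hj
    rcases Nat.lt_succ_iff_lt_or_eq.1 hj with hj | rfl
    · refine le_trans ?_ (le_max_left _ _)
      rw [List.drop_append_of_le_length hj.le]
      have hne : a.primeFactorsList.drop j ≠ [] := by
        intro h; rw [List.drop_eq_nil_iff] at h; omega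
      have hh : (List.drop j a.primeFactorsList ++ [p]).headI = (List.drop j a.primeFactorsList).headI := by
        cases hd : List.drop j a.primeFactorsList with
        | nil => exact absurd hd hne
        | cons y l => rfl
      rw [hh, List.prod_append, List.prod_singleton]
      have := lefold _ _ (List.mem_map_of_mem (f := fun j => (a.primeFactorsList.drop j).headI * (a.primeFactorsList.drop j).prod) (List.mem_range.2 hj))
      calc _ = p * ((a.primeFactorsList.drop j).headI * (a.primeFactorsList.drop j).prod) := by ring
        _ ≤ _ := Nat.mul_le_mul_left _ this
    · refine le_trans ?_ (le_max_right _ _)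
      rw [List.drop_left]
      simp

lemma SS_ext {t a p : ℕ} (ha : 0 < a) (hp : p.Prime) (h : ∀ r, r.Prime → r ∣ a → r ≤ p)
    (hS : SS a ≤ t * a) (hpt : p ≤ t * a) : SS (a * p) ≤ t * (a * p) := by
  refine (SS_mul ha hp h).trans (max_le ?_ ?_)
  · calc p * SS a ≤ p * (t * a) := Nat.mul_le_mul_left _ hS
      _ = _ := by ring
  · calc p * p ≤ p * (t * a) := Nat.mul_le_mul_left _ hpt
      _ = _ := by ring

lemma AA_SS {t n a : ℕ} (ht : 1 ≤ t) (ha : a ∈ AA t n) : SS a ≤ t * a := by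
  induction n generalizing a with
  | zero => simp [AA] at ha; subst ha; simp [SS]; omega
  | succ n ih =>
    rw [AA_succ] at ha
    split_ifs at ha with hn
    · rw [mem_union, mem_image] at ha
      rcases ha with ha | ⟨b, hb, rfl⟩
      · exact ih (mem_stepSurv.1 ha).1
      · have hb' := mem_stepSurv.1 hb
        exact SS_ext (AA_pos hb'.1) hn (fun r hr hd => (AA_primes hb'.1 hr hd).le) (ih hb'.1) hb'.2
    · exact ih (mem_stepSurv.1 ha).1

lemma AA_insert {t n a p : ℕ} (ha : a ∈ AA t n) (hp : p.Prime) (hpn : p < n) (hd : ¬ p ∣ a) :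
    a * p ∈ AA t n := by
  induction n generalizing a with
  | zero => omega
  | succ n ih =>
    have mono : ∀ b, n ≤ t * b → n ≤ t * (b * p) := by
      intro b hb
      have : t * b * 1 ≤ t * b * p := Nat.mul_le_mul_left _ hp.one_le
      rw [← mul_assoc]; omega
    rw [AA_succ] at ha ⊢
    split_ifs at ha ⊢ with hn
    · rw [mem_union, mem_image] at ha ⊢
      rcases Nat.lt_succ_iff_lt_or_eq.1 hpn with hlt | rfl
      · rcases ha with ha | ⟨b, hb, rfl⟩
        · left
          rw [mem_stepSurv] at ha ⊢
          exact ⟨ih ha.1 hlt hd, mono _ ha.2⟩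
        · right
          refine ⟨b * p, ?_, by ring⟩
          rw [mem_stepSurv] at hb ⊢
          exact ⟨ih hb.1 hlt (fun h => hd (h.mul_right _)), mono _ hb.2⟩
      · rcases ha with ha | ⟨b, hb, rfl⟩
        · right; exact ⟨a, ha, rfl⟩
        · exact absurd (Dvd.intro_left b rfl) hd
    · have hlt : p < n := by
        rcases Nat.lt_succ_iff_lt_or_eq.1 hpn with hlt | rfl
        · exact hlt
        · exact absurd hp hn
      rw [mem_stepSurv] at ha ⊢
      exact ⟨ih ha.1 hlt hd, mono _ ha.2⟩

lemma AA_sum_succ (t n : ℕ) (f : ℕ → ℝ) : ∑ a ∈ AA t (n+1), f a =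
    ∑ a ∈ stepSurv t n (AA t n), (f a + if n.Prime then f (a * n) else 0) := by
  rw [AA_succ]
  split_ifs with hn
  · rw [sum_union, sum_image, sum_add_distrib]
    · intro a _ b _ h
      exact Nat.eq_of_mul_eq_mul_right hn.pos h
    · rw [disjoint_left]
      intro a ha hb
      obtain ⟨b, hb, rfl⟩ := mem_image.1 hb
      have := AA_primes (mem_stepSurv.1 ha).1 hn (Dvd.intro_left b rfl)
      omega
  · simp

/-- normalized expectation -/
noncomputable def EE (t n : ℕ) (f : ℕ → ℝ) : ℝ := (∑ a ∈ AA t n, f a / a) / ZZ n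

lemma EE_succ (t n : ℕ) (f : ℕ → ℝ) : EE t (n+1) f =
    (∑ a ∈ stepSurv t n (AA t n), (if n.Prime then (n * f a + f (a * n)) / (n+1) else f a) / a) / ZZ n := by
  unfold EE
  rw [AA_sum_succ, ZZ_succ]
  split_ifs with hn
  · have hn0 : (0:ℝ) < n := by exact_mod_cast hn.pos
    rw [← div_div, div_right_comm]
    congr 1
    rw [sum_div]
    apply sum_congr rfl
    intro a ha
    have ha0 : (0:ℝ) < a := by exact_mod_cast AA_pos (mem_stepSurv.1 ha).1
    push_cast
    field_simp
  · simp

lemma EE_mono {t n : ℕ} {f g : ℕ → ℝ} (h : ∀ a ∈ AA t n, f a ≤ g a) : EE t n f ≤ EE t n g := by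
  unfold EE
  have := ZZ_pos n
  gcongr with a ha
  exact h a ha

lemma EE_add (t n : ℕ) (f g : ℕ → ℝ) : EE t n (fun a => f a + g a) = EE t n f + EE t n g := by
  unfold EE
  rw [← add_div, ← sum_add_distrib]
  simp only [add_div]

lemma EE_const_mul (t n : ℕ) (c : ℝ) (f : ℕ → ℝ) : EE t n (fun a => c * f a) = c * EE t n f := by
  unfold EE
  rw [← mul_div_assoc, mul_sum]
  simp only [mul_div_assoc]

lemma EE_lin (t n : ℕ) (c : ℝ) : EE t (n+1) (fun a => Real.log a - HH (n+1) + c) =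
    (∑ a ∈ stepSurv t n (AA t n), (Real.log a - HH n + c) / a) / ZZ n := by
  rw [EE_succ]
  congr 1
  apply sum_congr rfl
  intro a ha
  have ha0 : (0:ℝ) < a := by exact_mod_cast AA_pos (mem_stepSurv.1 ha).1
  congr 1
  rw [HH_succ]
  split_ifs with hn
  · have hn0 : (0:ℝ) < n := by exact_mod_cast hn.pos
    push_cast
    rw [Real.log_mul (by positivity) (by positivity)]
    field_simp
    ring
  · simp

lemma EE_sq (t n : ℕ) : EE t (n+1) (fun a => (Real.log a - HH (n+1))^2) =
    (∑ a ∈ stepSurv t n (AA t n), ((Real.log a - HH n)^2 +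
      if n.Prime then n * (Real.log n / (n+1))^2 else 0) / a) / ZZ n := by
  rw [EE_succ]
  congr 1
  apply sum_congr rfl
  intro a ha
  have ha0 : (0:ℝ) < a := by exact_mod_cast AA_pos (mem_stepSurv.1 ha).1
  congr 1
  rw [HH_succ]
  split_ifs with hn
  · have hn0 : (0:ℝ) < n := by exact_mod_cast hn.pos
    push_cast
    rw [Real.log_mul (by positivity) (by positivity)]
    field_simp
    ring
  · simp

lemma F_lower {t : ℕ} (ht : 1 ≤ t) {C : ℝ} (hC : ∀ n : ℕ, 1 ≤ n → |HH n - Real.log n| ≤ C) (n : ℕ) :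
    Real.log t - C ≤ EE t n (fun a => Real.log a - HH n + (Real.log t - C)) := by
  induction n with
  | zero => simp [EE, AA, HH, ZZ]
  | succ n ih =>
    refine ih.trans ?_
    rw [EE_lin]
    unfold EE
    have := ZZ_pos n
    refine div_le_div_of_nonneg_right ?_ this.le
    rw [stepSurv, sum_filter]
    apply sum_le_sum
    intro a ha
    split_ifs with h
    · exact le_rfl
    · have ha0 := AA_pos ha
      have ha0' : (0:ℝ) < a := by exact_mod_cast ha0
      have ht0' : (0:ℝ) < t := by exact_mod_cast ht
      have hlt : t * a < n := by omega
      have h1 := (abs_le.1 (hC n (by omega))).1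
      have h2 : Real.log (t * a) ≤ Real.log n := by
        apply Real.log_le_log (by positivity)
        exact_mod_cast hlt.le
      rw [Real.log_mul (by positivity) (by positivity)] at h2
      apply div_nonpos_of_nonpos_of_nonneg _ ha0'.le
      linarith

lemma AA_log_ge {t n a : ℕ} (ht : 1 ≤ t) (hn : 2 ≤ n) (ha : a ∈ AA t n) :
    Real.log n - 1 - Real.log t ≤ Real.log a := by
  have ha0' : (0:ℝ) < a := by exact_mod_cast AA_pos ha
  have ht0' : (0:ℝ) < t := by exact_mod_cast ht
  have h := AA_alive ha
  have h2 : n ≤ 2 * (t * a) := by omega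
  have h3 : Real.log n ≤ Real.log (2 * (t * a)) := by
    apply Real.log_le_log
    · have : 0 < n := by omega
      exact_mod_cast this
    · exact_mod_cast h2
  rw [Real.log_mul (by positivity) (by positivity), Real.log_mul (by positivity) (by positivity)] at h3
  have := Real.log_two_lt_d9
  linarith

lemma F_upper {t : ℕ} (ht : 1 ≤ t) {C : ℝ} (hC : ∀ n : ℕ, 1 ≤ n → |HH n - Real.log n| ≤ C) (n : ℕ) :
    EE t n (fun a => Real.log a - HH n + (Real.log t + C + 1)) ≤ Real.log t + C + 1 := by
  induction n with
  | zero => simp [EE, AA, HH, ZZ]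
  | succ n ih =>
    refine le_trans ?_ ih
    rw [EE_lin]
    unfold EE
    have := ZZ_pos n
    refine div_le_div_of_nonneg_right ?_ this.le
    rw [stepSurv, sum_filter]
    apply sum_le_sum
    intro a ha
    split_ifs with h
    · exact le_rfl
    · have ha0 := AA_pos ha
      have ha0' : (0:ℝ) < a := by exact_mod_cast ha0
      have hlt : t * a < n := by omega
      have : 0 < t * a := Nat.mul_pos (by omega) ha0
      have h1 := (abs_le.1 (hC n (by omega))).2
      have h2 := AA_log_ge ht (by omega) ha
      apply div_nonneg _ ha0'.le
      linarith

lemma V_step (t n : ℕ) : EE t (n+1) (fun a => (Real.log a - HH (n+1))^2) ≤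
    EE t n (fun a => (Real.log a - HH n)^2) +
      (if n.Prime then Real.log n * (Real.log n / (n+1)) else 0) * EE t n (fun _ => 1) := by
  rw [EE_sq, ← EE_const_mul, ← EE_add]
  unfold EE
  have := ZZ_pos n
  gcongr
  have hl := Real.log_natCast_nonneg n
  calc _ ≤ ∑ a ∈ AA t n, ((Real.log a - HH n)^2 +
      if n.Prime then n * (Real.log n / (n+1))^2 else 0) / a := by
        apply sum_le_sum_of_subset_of_nonneg
        · exact filter_subset _ _
        · intro a _ _
          split_ifs <;> positivity
    _ ≤ _ := by
      gcongr with a ha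
      split_ifs
      · rw [mul_one]
        have e : Real.log n * (Real.log n / (n+1)) - n * (Real.log n / (n+1))^2 = (Real.log n / (n+1))^2 := by
          field_simp; ring
        nlinarith [sq_nonneg (Real.log n / (n+1))]
      · simp


def BigP (n : ℕ) : Finset ℕ := (range n).filter (fun p => p.Prime ∧ n^3 < p^4)
def cntBig (n a : ℕ) : ℕ := #((BigP n).filter (fun p => p ∣ a))

lemma mem_BigP {n p : ℕ} : p ∈ BigP n ↔ p < n ∧ p.Prime ∧ n^3 < p^4 := by simp [BigP]

lemma cntBig_mul {n a p : ℕ} (hp : p ∈ BigP n) (hd : ¬ p ∣ a) : cntBig n (a * p) = cntBig n a + 1 := by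
  unfold cntBig
  have hpp := (mem_BigP.1 hp).2.1
  have : (BigP n).filter (fun r => r ∣ a * p) = insert p ((BigP n).filter (fun r => r ∣ a)) := by
    ext r
    simp only [mem_filter, mem_insert]
    constructor
    · rintro ⟨h1, h2⟩
      have hr := (mem_BigP.1 h1).2.1
      rcases (hr.dvd_mul).1 h2 with h | h
      · right; exact ⟨h1, h⟩
      · left; exact (Nat.prime_dvd_prime_iff_eq hr hpp).1 h
    · rintro (rfl | ⟨h1, h2⟩)
      · exact ⟨hp, Dvd.intro_left a rfl⟩
      · exact ⟨h1, h2.mul_right _⟩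
  rw [this, card_insert_of_notMem]
  simp [hd]

lemma cntBig_le {n a k : ℕ} (ha : 0 < a) (h : k ≤ cntBig n a) (hn : 1 ≤ n) : n^(3*k) ≤ a^4 := by
  have hd : ∏ p ∈ (BigP n).filter (fun p => p ∣ a), p ∣ a := by
    apply Finset.prod_primes_dvd
    · intro p hp
      exact (mem_BigP.1 (mem_filter.1 hp).1).2.1.prime
    · intro p hp
      exact (mem_filter.1 hp).2
  calc n^(3*k) ≤ n^(3 * cntBig n a) := Nat.pow_le_pow_right hn (by omega)
    _ = ∏ p ∈ (BigP n).filter (fun p => p ∣ a), n^3 := by rw [prod_const, ← pow_mul]; rfl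
    _ ≤ ∏ p ∈ (BigP n).filter (fun p => p ∣ a), p^4 := by
      apply prod_le_prod'
      intro p hp
      exact (mem_BigP.1 (mem_filter.1 hp).1).2.2.le
    _ = (∏ p ∈ (BigP n).filter (fun p => p ∣ a), p)^4 := by rw [prod_pow]
    _ ≤ _ := Nat.pow_le_pow_left (Nat.le_of_dvd ha hd) 4

lemma big_sum {C : ℝ} (hC : ∀ n : ℕ, 1 ≤ n → |HH n - Real.log n| ≤ C) (k n a : ℕ) (hn : 2 ≤ n)
    (hlog : 8 * (2 * C + 1 + 2 * k) ≤ Real.log n) (hk : cntBig n a ≤ k) :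
    1/8 ≤ ∑ p ∈ (BigP n).filter (fun p => ¬ p ∣ a), 1 / (p:ℝ) := by
  have hn0 : (0:ℝ) < n := by have : 0 < n := by omega
                             exact_mod_cast this
  have hl0 : 0 < Real.log n := Real.log_pos (by exact_mod_cast hn)
  set s := Nat.sqrt (Nat.sqrt (n^3)) with hs
  have s4 : s^4 ≤ n^3 := by
    calc s^4 = (s^2)^2 := by ring
      _ ≤ (Nat.sqrt (n^3))^2 := Nat.pow_le_pow_left (Nat.sqrt_le' _) 2
      _ ≤ n^3 := Nat.sqrt_le' _
  have s1 : 1 ≤ s := by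
    rw [hs, Nat.le_sqrt, Nat.le_sqrt]
    have : 1 ≤ n^3 := Nat.one_le_pow _ _ (by omega)
    omega
  have hsp : ∀ p, p^4 ≤ n^3 → p < s + 1 := by
    intro p hp
    have : p ≤ s := by
      rw [hs, Nat.le_sqrt', Nat.le_sqrt']
      rw [← pow_mul]; exact hp
    omega
  have split : HH n ≤ ∑ p ∈ BigP n, Real.log p / (p+1) + HH (s+1) := by
    unfold HH
    rw [← sum_filter_add_sum_filter_not ((range n).filter Nat.Prime) (fun p => n^3 < p^4)]
    rw [filter_filter]
    refine add_le_add le_rfl ?_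
    apply sum_le_sum_of_subset_of_nonneg
    · intro p hp
      rw [mem_filter, mem_filter] at hp
      rw [mem_filter, mem_range]
      exact ⟨hsp p (by omega), hp.1.2⟩
    · intro p _ _
      have := Real.log_natCast_nonneg p
      positivity
  have h1 := (abs_le.1 (hC n (by omega))).1
  have h2 := (abs_le.1 (hC (s+1) (by omega))).2
  have hs0 : (0:ℝ) < s := by exact_mod_cast s1
  have h3 : Real.log ((s+1 : ℕ):ℝ) ≤ Real.log 2 + Real.log s := by
    rw [← Real.log_mul (by norm_num) (by positivity)]
    apply Real.log_le_log (by positivity)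
    have : s + 1 ≤ 2 * s := by omega
    exact_mod_cast this
  have h4 : 4 * Real.log s ≤ 3 * Real.log n := by
    have : Real.log ((s:ℝ)^4) ≤ Real.log ((n:ℝ)^3) := by
      apply Real.log_le_log (by positivity)
      exact_mod_cast s4
    rw [Real.log_pow, Real.log_pow] at this
    push_cast at this
    exact this
  have hl2 := Real.log_two_lt_d9
  have h5 : ∑ p ∈ BigP n, Real.log p / (p+1) ≤ Real.log n * ∑ p ∈ BigP n, 1/(p:ℝ) := by
    rw [mul_sum]
    apply sum_le_sum
    intro p hp
    obtain ⟨hp1, hp2, hp3⟩ := mem_BigP.1 hp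
    have hp0 : (0:ℝ) < p := by exact_mod_cast hp2.pos
    rw [mul_one_div]
    have := Real.log_natCast_nonneg p
    have : Real.log p ≤ Real.log n := Real.log_le_log hp0 (by exact_mod_cast hp1.le)
    gcongr
    linarith
  have h6 : Real.log n * ∑ p ∈ (BigP n).filter (fun p => p ∣ a), 1/(p:ℝ) ≤ 2 * k := by
    rw [mul_sum]
    calc _ ≤ ∑ p ∈ (BigP n).filter (fun p => p ∣ a), (2:ℝ) := by
          apply sum_le_sum
          intro p hp
          obtain ⟨hp1, hp2, hp3⟩ := mem_BigP.1 (mem_filter.1 hp).1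
          have hp0 : (0:ℝ) < p := by exact_mod_cast hp2.pos
          have hpn : n ≤ p^2 := by
            have : n^2 ≤ n^3 := Nat.pow_le_pow_right (by omega) (by omega)
            have : n^2 ≤ (p^2)^2 := by rw [← pow_mul]; exact this.trans hp3.le
            exact (Nat.pow_le_pow_iff_left (by norm_num)).1 this
          have : Real.log n ≤ Real.log ((p:ℝ)^2) := Real.log_le_log hn0 (by exact_mod_cast hpn)
          rw [Real.log_pow] at this
          have := Real.log_le_self hp0.le
          rw [mul_one_div, div_le_iff₀ hp0]
          push_cast at *
          linarith
      _ = 2 * (cntBig n a : ℝ) := by rw [sum_const, nsmul_eq_mul, mul_comm]; rfl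
      _ ≤ _ := by
        have : (cntBig n a : ℝ) ≤ k := by exact_mod_cast hk
        linarith
  rw [← sum_filter_add_sum_filter_not (BigP n) (fun p => p ∣ a) (fun p => 1/(p:ℝ)), mul_add] at h5
  have : Real.log n * (1/8) ≤ Real.log n * ∑ p ∈ (BigP n).filter (fun p => ¬ p ∣ a), 1 / (p:ℝ) := by
    linarith
  exact le_of_mul_le_mul_left this hl0

noncomputable def TT (t n k X : ℕ) : ℝ :=
  ∑ a ∈ (AA t n).filter (fun a => a ≤ X ∧ k ≤ cntBig n a), 1 / (a:ℝ)

lemma TT_nonneg (t n k X : ℕ) : 0 ≤ TT t n k X := sum_nonneg (fun _ _ => by positivity)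

lemma shift_one {t n k X : ℕ} (hn : 1 ≤ n)
    (hs : ∀ a, cntBig n a ≤ k → 1/8 ≤ ∑ p ∈ (BigP n).filter (fun p => ¬ p ∣ a), 1 / (p:ℝ)) :
    TT t n k X ≤ (1 + 8 * (k+1)) * TT t n (k+1) (X*n) := by
  set S := (AA t n).filter (fun a => a ≤ X ∧ cntBig n a = k) with hS
  set S' := (AA t n).filter (fun a => a ≤ X * n ∧ cntBig n a = k+1) with hS'
  have h1 : TT t n k X ≤ ∑ a ∈ S, 1/(a:ℝ) + TT t n (k+1) (X*n) := by
    unfold TT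
    rw [← sum_filter_add_sum_filter_not ((AA t n).filter (fun a => a ≤ X ∧ k ≤ cntBig n a)) (fun a => cntBig n a = k)]
    apply add_le_add
    · apply sum_le_sum_of_subset_of_nonneg
      · intro a ha
        simp only [mem_filter, hS] at ha ⊢
        tauto
      · intros; positivity
    · apply sum_le_sum_of_subset_of_nonneg
      · intro a ha
        simp only [mem_filter] at ha ⊢
        refine ⟨ha.1.1, ?_, by omega⟩
        exact ha.1.2.1.trans (Nat.le_mul_of_pos_right _ (by omega))
      · intros; positivity
  have h2 : ∑ a ∈ S, 1/(a:ℝ) * (1/8) ≤ (k+1) * ∑ a ∈ S', 1/(a:ℝ) := by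
    calc _ ≤ ∑ a ∈ S, ∑ p ∈ (BigP n).filter (fun p => ¬ p ∣ a), 1/((a * p : ℕ):ℝ) := by
          apply sum_le_sum
          intro a ha
          have := hs a (by simp only [hS, mem_filter] at ha; omega)
          calc _ ≤ 1/(a:ℝ) * ∑ p ∈ (BigP n).filter (fun p => ¬ p ∣ a), 1 / (p:ℝ) := by gcongr
            _ = _ := by
              rw [mul_sum]
              apply sum_congr rfl
              intro p _
              push_cast
              rw [one_div_mul_one_div]
      _ = ∑ x ∈ S.sigma (fun a => (BigP n).filter (fun p => ¬ p ∣ a)), 1/((x.1 * x.2 : ℕ):ℝ) := by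
          rw [sum_sigma]
      _ = ∑ y ∈ (S.sigma (fun a => (BigP n).filter (fun p => ¬ p ∣ a))).image
            (fun x => (⟨x.1 * x.2, x.2⟩ : Σ _ : ℕ, ℕ)), 1/((y.1 : ℕ):ℝ) := by
          rw [sum_image]
          rintro ⟨a, p⟩ h ⟨b, r⟩ _ e
          simp only [Sigma.mk.injEq, heq_eq_eq] at e
          obtain ⟨e1, rfl⟩ := e
          have : 0 < p := by
            simp only [coe_sigma, Set.mem_sigma_iff, mem_coe, mem_filter, mem_BigP] at h
            exact h.2.1.2.1.pos
          have := Nat.eq_of_mul_eq_mul_right this e1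
          subst this
          rfl
      _ ≤ ∑ y ∈ S'.sigma (fun a => (BigP n).filter (fun p => p ∣ a)), 1/((y.1 : ℕ):ℝ) := by
          apply sum_le_sum_of_subset_of_nonneg
          · intro y hy
            rw [mem_image] at hy
            obtain ⟨⟨a, p⟩, hx, rfl⟩ := hy
            rw [mem_sigma] at hx
            simp only [hS, mem_filter] at hx
            obtain ⟨⟨h1, h2, h3⟩, h4, h5⟩ := hx
            have h6 := mem_BigP.1 h4
            rw [mem_sigma]
            simp only [hS', mem_filter]
            refine ⟨⟨AA_insert h1 h6.2.1 h6.1 h5, Nat.mul_le_mul h2 h6.1.le, ?_⟩, h4, Dvd.intro_left a rfl⟩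
            rw [cntBig_mul h4 h5, h3]
          · intros; positivity
      _ = _ := by
          rw [sum_sigma, mul_sum]
          apply sum_congr rfl
          intro a ha
          simp only [sum_const, nsmul_eq_mul]
          have : cntBig n a = k+1 := by simp only [hS', mem_filter] at ha; exact ha.2.2
          unfold cntBig at this
          rw [this]; push_cast; ring
  have h3 : ∑ a ∈ S', 1/(a:ℝ) ≤ TT t n (k+1) (X*n) := by
    unfold TT
    apply sum_le_sum_of_subset_of_nonneg
    · intro a ha
      simp only [mem_filter, hS'] at ha ⊢
      refine ⟨ha.1, ha.2.1, by omega⟩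
    · intros; positivity
  rw [← sum_mul] at h2
  have h4 : ((k:ℝ)+1) * ∑ a ∈ S', 1/(a:ℝ) ≤ (k+1) * TT t n (k+1) (X*n) := by gcongr
  linarith

lemma shift_all {C : ℝ} (hC : ∀ n : ℕ, 1 ≤ n → |HH n - Real.log n| ≤ C) (k : ℕ) :
    ∃ B : ℝ, 0 < B ∧ ∀ t n X : ℕ, 2 ≤ n → 8 * (2 * C + 1 + 2 * k) ≤ Real.log n →
      TT t n 0 X ≤ B * TT t n k (X * n^k) := by
  induction k with
  | zero => exact ⟨1, one_pos, fun t n X _ _ => by simp⟩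
  | succ k ih =>
    obtain ⟨B, hB, h⟩ := ih
    refine ⟨B * (1 + 8 * (k+1)), by positivity, ?_⟩
    intro t n X hn hl
    push_cast at hl
    have hl' : 8 * (2 * C + 1 + 2 * k) ≤ Real.log n := by linarith
    refine (h t n X hn hl').trans ?_
    rw [mul_assoc B]
    have := shift_one (t := t) (X := X * n^k) (by omega) (fun a ha => big_sum hC k n a hn hl' ha)
    rw [pow_succ, ← mul_assoc X]
    exact mul_le_mul_of_nonneg_left this hB.le

lemma EE_one_le (t n : ℕ) : EE t n (fun _ => 1) ≤ 1 := by
  induction n with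
  | zero => simp [EE, AA, ZZ]
  | succ n ih =>
    refine le_trans ?_ ih
    rw [EE_succ]
    unfold EE
    have := ZZ_pos n
    refine div_le_div_of_nonneg_right ?_ this.le
    calc _ = ∑ a ∈ stepSurv t n (AA t n), 1/(a:ℝ) := by
          apply sum_congr rfl
          intro a _
          congr 1
          split_ifs
          · field_simp
          · rfl
      _ ≤ _ := by
        apply sum_le_sum_of_subset_of_nonneg (filter_subset _ _)
        intros; positivity

lemma U_bound {t : ℕ} (ht : 1 ≤ t) {C : ℝ} (hC1 : 1 ≤ C)
    (hC : ∀ n : ℕ, 1 ≤ n → |HH n - Real.log n| ≤ C) :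
    ∃ C3 : ℝ, 0 < C3 ∧ ∀ n : ℕ, Real.log n * EE t n (fun _ => 1) ≤ C3 := by
  obtain ⟨B, hB, hsh⟩ := shift_all hC 4
  have hlt : 0 ≤ Real.log t := Real.log_natCast_nonneg t
  set c2 := Real.log t + C + 1 with hc2
  set M := 8 * (2 * C + 1 + 2 * (4:ℕ)) with hM
  have hM0 : 0 < M := by rw [hM]; positivity
  refine ⟨max M (B * c2), lt_max_of_lt_left hM0, ?_⟩
  intro n
  have hl0 := Real.log_natCast_nonneg n
  by_cases hn : Real.log n < M
  · refine le_trans ?_ (le_max_left _ _)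
    have := EE_one_le t n
    calc Real.log n * EE t n (fun _ => 1) ≤ Real.log n * 1 := by gcongr
      _ ≤ M := by linarith
  · push Not at hn
    refine le_trans ?_ (le_max_right _ _)
    have hn2 : 2 ≤ n := by
      by_contra h
      have : n = 0 ∨ n = 1 := by omega
      rcases this with rfl | rfl <;> simp at hn <;> linarith
    have hZ := ZZ_pos n
    have e1 : ∑ a ∈ AA t n, 1/(a:ℝ) = TT t n 0 ((AA t n).sup id) := by
      unfold TT
      rw [filter_true_of_mem]
      intro a ha
      exact ⟨le_sup (f := id) ha, Nat.zero_le _⟩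
    have e2 : Real.log n * TT t n 4 ((AA t n).sup id * n^4) ≤ ∑ a ∈ AA t n, (Real.log a - HH n + c2) / a := by
      unfold TT
      rw [mul_sum, sum_filter]
      apply sum_le_sum
      intro a ha
      have ha0 : (0:ℝ) < a := by exact_mod_cast AA_pos ha
      have hh := (abs_le.1 (hC n (by omega))).2
      split_ifs with h
      · have := cntBig_le (AA_pos ha) h.2 (by omega)
        have : Real.log ((n:ℝ)^(3*4)) ≤ Real.log ((a:ℝ)^4) := by
          apply Real.log_le_log
          · have : 0 < n := by omega
            positivity
          · exact_mod_cast this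
        rw [Real.log_pow, Real.log_pow] at this
        push_cast at this
        rw [mul_one_div]
        gcongr
        linarith
      · have := AA_log_ge ht hn2 ha
        apply div_nonneg _ ha0.le
        linarith
    have e3 := F_upper ht hC n
    unfold EE at e3 ⊢
    rw [div_le_iff₀ hZ] at e3
    rw [mul_div_assoc', div_le_iff₀ hZ, e1]
    calc _ ≤ Real.log n * (B * TT t n 4 ((AA t n).sup id * n^4)) := by
          have := hsh t n ((AA t n).sup id) hn2 hn
          gcongr
      _ = B * (Real.log n * TT t n 4 ((AA t n).sup id * n^4)) := by ring
      _ ≤ B * (c2 * ZZ n) := by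
          have := e2.trans e3
          gcongr
      _ = _ := by ring

lemma V_bound {t : ℕ} {C3 : ℝ} (h : ∀ n : ℕ, Real.log n * EE t n (fun _ => 1) ≤ C3) (n : ℕ) :
    EE t n (fun a => (Real.log a - HH n)^2) ≤ C3 * HH n := by
  induction n with
  | zero => simp [EE, AA, HH, ZZ]
  | succ n ih =>
    refine (V_step t n).trans ?_
    rw [HH_succ, mul_add]
    refine add_le_add ih ?_
    split_ifs
    · have hl0 := Real.log_natCast_nonneg n
      calc _ = (Real.log n * EE t n (fun _ => 1)) * (Real.log n / (n+1)) := by ring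
        _ ≤ _ := by
          have := h n
          gcongr
    · simp

lemma HH_nonneg (n : ℕ) : 0 ≤ HH n := by
  unfold HH
  apply sum_nonneg
  intro p _
  have := Real.log_natCast_nonneg p
  positivity

lemma low_bound {t : ℕ} (ht : 1 ≤ t) {C : ℝ} (hC1 : 1 ≤ C)
    (hC : ∀ n : ℕ, 1 ≤ n → |HH n - Real.log n| ≤ C) (htC : C + 1 ≤ Real.log t) :
    ∃ K : ℕ, ∃ c : ℝ, 0 < c ∧ ∃ N : ℕ, ∀ n : ℕ, N ≤ n → c ≤ TT t n 0 (n^K) := by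
  obtain ⟨C3, hC3, hU⟩ := U_bound ht hC1 hC
  set D := Real.log t - C with hD
  have hD1 : 1 ≤ D := by linarith
  obtain ⟨J, hJ⟩ := exists_nat_ge (8 * C3 / D + 1)
  have hJ1 : (1:ℝ) ≤ J := by
    have : 0 ≤ 8 * C3 / D := by positivity
    linarith
  have hlog : Filter.Tendsto (fun n : ℕ => Real.log n) Filter.atTop Filter.atTop :=
    Real.tendsto_log_atTop.comp tendsto_natCast_atTop_atTop
  obtain ⟨N, hN⟩ := Filter.eventually_atTop.1 (hlog.eventually_ge_atTop (C + D + 1))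
  refine ⟨J + 2, D / (4 * (J + 2 + D)), by positivity, max N 1, ?_⟩
  intro n hn
  have hl := hN n ((le_max_left _ _).trans hn)
  have hn1 : 1 ≤ n := (le_max_right _ _).trans hn
  have hn0 : (0:ℝ) < n := by exact_mod_cast hn1
  set l := Real.log n with hldef
  have hl0 : 0 < l := by linarith
  have hh := abs_le.1 (hC n hn1)
  have hHH := HH_nonneg n
  have h1 := F_lower ht hC n
  rw [← hD] at h1
  have h2 : EE t n (fun a => Real.log a - HH n + D) ≤
      EE t n (fun a => (J + 2 + D) * l * (if a ≤ n^(J+2) then 1 else 0) +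
        (2 / (J * l)) * (Real.log a - HH n)^2) := by
    apply EE_mono
    intro a ha
    have ha0 : (0:ℝ) < a := by exact_mod_cast AA_pos ha
    split_ifs with h
    · have : Real.log a ≤ Real.log ((n:ℝ)^(J+2)) := Real.log_le_log ha0 (by exact_mod_cast h)
      rw [Real.log_pow] at this
      push_cast at this
      have q : 0 ≤ (2 / (J * l)) * (Real.log a - HH n)^2 := by positivity
      have : D ≤ D * l := by nlinarith
      nlinarith
    · have : Real.log ((n:ℝ)^(J+2)) ≤ Real.log a := Real.log_le_log (by positivity) (by
        push Not at h
        exact_mod_cast h.le)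
      rw [Real.log_pow] at this
      push_cast at this
      set Y := Real.log a - HH n with hY
      have hY1 : J * l ≤ Y := by linarith
      have hY2 : D ≤ Y := by nlinarith
      have hp : 0 < J * l := by positivity
      have : 2 * Y ≤ (2 / (J * l)) * Y^2 := by
        rw [div_mul_eq_mul_div, le_div_iff₀ hp]
        nlinarith
      linarith
  rw [EE_add t n (fun a => (J + 2 + D) * l * (if a ≤ n^(J+2) then 1 else 0)), EE_const_mul, EE_const_mul] at h2
  have h3 := V_bound hU n
  have h4 : (2 / (J * l)) * EE t n (fun a => (Real.log a - HH n)^2) ≤ D / 2 := by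
    calc _ ≤ (2 / (J * l)) * (C3 * HH n) := by gcongr
      _ ≤ (2 / (J * l)) * (C3 * (2 * l)) := by
        gcongr
        linarith
      _ = 4 * C3 / J := by field_simp; norm_num
      _ ≤ D / 2 := by
        rw [div_le_div_iff₀ (by linarith) (by norm_num)]
        have : 8 * C3 / D ≤ J := by linarith
        rw [div_le_iff₀ (by linarith)] at this
        linarith
  have h5 : D / 2 ≤ (J + 2 + D) * l * EE t n (fun a => if a ≤ n^(J+2) then 1 else 0) := by linarith
  have h6 : EE t n (fun a => if a ≤ n^(J+2) then 1 else 0) = TT t n 0 (n^(J+2)) / ZZ n := by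
    unfold EE TT
    congr 1
    rw [sum_filter]
    apply sum_congr rfl
    intro a _
    simp only [Nat.zero_le, and_true]
    split_ifs <;> simp
  rw [h6] at h5
  have h7 := ZZ_lower n hn1
  have h8 := TT_nonneg t n 0 (n^(J+2))
  have h9 : TT t n 0 (n^(J+2)) / ZZ n ≤ TT t n 0 (n^(J+2)) / (l/2) := by
    gcongr
  have h10 : D / 2 ≤ (J + 2 + D) * l * (TT t n 0 (n^(J+2)) / (l/2)) := by
    refine h5.trans ?_
    gcongr
  have h11 : (J + 2 + D) * l * (TT t n 0 (n^(J+2)) / (l/2)) = 2 * (J + 2 + D) * TT t n 0 (n^(J+2)) := by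
    field_simp
  rw [div_le_iff₀ (by positivity)]
  linarith


noncomputable def PP (R : ℕ) (r : ℝ) : Finset ℕ :=
  (Ico (⌊r⌋₊ + 1) (⌊R * r⌋₊ + 1)).filter Nat.Prime

lemma mem_PP {R : ℕ} {r : ℝ} (hr : 0 ≤ r) {p : ℕ} (hp : p ∈ PP R r) :
    p.Prime ∧ r < p ∧ (p:ℝ) ≤ R * r := by
  unfold PP at hp
  rw [mem_filter, mem_Ico] at hp
  refine ⟨hp.2, ?_, ?_⟩
  · exact (Nat.floor_lt hr).1 (by omega)
  · exact (Nat.le_floor_iff (by positivity)).1 (by omega)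

lemma PP_card {C : ℝ} (hC : ∀ n : ℕ, 1 ≤ n → |HH n - Real.log n| ≤ C) {R : ℕ} (hR1 : 1 ≤ R)
    (hR : 2 * C + 2 ≤ Real.log R) (r : ℝ) (hr : 1 ≤ r) :
    r ≤ Real.log (R * r) * #(PP R r) := by
  have hr0 : 0 < r := by linarith
  have hR0 : (1:ℝ) ≤ R := by exact_mod_cast hR1
  set m := ⌊r⌋₊ + 1
  set M := ⌊R * r⌋₊ + 1
  have hmM : m ≤ M := by
    have : ⌊r⌋₊ ≤ ⌊R * r⌋₊ := Nat.floor_le_floor (by nlinarith)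
    omega
  have h1 := (abs_le.1 (hC m (by omega))).2
  have h2 := (abs_le.1 (hC M (by omega))).1
  have h3 : Real.log m ≤ Real.log 2 + Real.log r := by
    rw [← Real.log_mul (by norm_num) (by positivity)]
    apply Real.log_le_log
    · positivity
    · have := Nat.floor_le hr0.le
      push_cast [m]
      linarith
  have h4 : Real.log R + Real.log r ≤ Real.log M := by
    rw [← Real.log_mul (by positivity) (by positivity)]
    apply Real.log_le_log (by positivity)
    have := Nat.lt_floor_add_one (R * r)
    push_cast [M]
    linarith
  have hl2 := Real.log_two_lt_d9
  have h5 : HH M = HH m + ∑ p ∈ PP R r, Real.log p / (p+1) := by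
    unfold HH PP
    rw [sum_filter, sum_filter, sum_filter, sum_range_add_sum_Ico _ hmM]
  have h6 : ∑ p ∈ PP R r, Real.log p / (p+1) ≤ ∑ p ∈ PP R r, Real.log (R * r) / r := by
    apply sum_le_sum
    intro p hp
    obtain ⟨q1, q2, q3⟩ := mem_PP hr0.le hp
    have : Real.log p ≤ Real.log (R * r) := Real.log_le_log (by linarith) q3
    have := Real.log_natCast_nonneg p
    gcongr
    · linarith
    · linarith
  rw [sum_const, nsmul_eq_mul] at h6
  have h7 : 1 ≤ #(PP R r) * (Real.log (R * r) / r) := by linarith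
  rw [mul_div_assoc', le_div_iff₀ hr0] at h7
  linarith

lemma Pmax_le {a : ℕ} {q : ℝ} (hq : 1 ≤ q) (h : ∀ p, p.Prime → p ∣ a → (p:ℝ) ≤ q) : (Pmax a : ℝ) ≤ q := by
  unfold Pmax
  split_ifs
  · simpa
  · rw [← Nat.le_floor_iff (by linarith)]
    apply Finset.sup_le
    intro p hp
    rw [Nat.mem_primeFactors] at hp
    exact Nat.le_floor (h p hp.1 hp.2.1)

set_option maxHeartbeats 2000000 in
theorem main_result : ∃ γ : ℕ, 0 < γ ∧ ∃ x₀ : ℝ, 0 < x₀ ∧ ∀ x q : ℝ, x₀ ≤ x →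
    x ^ ((1 : ℝ) / 5) < q → q ≤ x ^ ((1 : ℝ) / 4) →
    Real.sqrt x / (2 ^ γ * q * Real.log x) ≤
      ({a : ℕ | 1 ≤ a ∧ Real.sqrt x / q < (a : ℝ) ∧ (a : ℝ) ≤ Real.sqrt (x / q) ∧
        (Pmax a : ℝ) ≤ q ∧ (SS a : ℝ) ≤ 2 ^ γ * Real.sqrt x / q}.ncard : ℝ) := by
  obtain ⟨C, hC1, hC⟩ := HH_bound
  have exlog : ∀ y : ℝ, ∃ t : ℕ, 1 ≤ t ∧ y ≤ Real.log t := by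
    intro y
    refine ⟨⌈Real.exp y⌉₊, Nat.one_le_ceil_iff.2 (Real.exp_pos y), ?_⟩
    rw [Real.le_log_iff_exp_le]
    · exact Nat.le_ceil _
    · exact_mod_cast Nat.one_le_ceil_iff.2 (Real.exp_pos y)
  obtain ⟨t, ht, htC⟩ := exlog (C + 1)
  obtain ⟨R, hR1, hR⟩ := exlog (2 * C + 2)
  obtain ⟨K, c, hc, N, hlow⟩ := low_bound ht hC1 hC htC
  obtain ⟨B, hB, hsh⟩ := shift_all hC (2 * K + 4)
  have hR0 : (1:ℝ) ≤ R := by exact_mod_cast hR1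
  have ht0 : (1:ℝ) ≤ t := by exact_mod_cast ht
  obtain ⟨g, hg⟩ := exists_nat_ge (max (t * R : ℝ) (B / c))
  have hg2 : max (t * R : ℝ) (B / c) ≤ 2 ^ (g+1) := by
    refine hg.trans ?_
    have : g + 1 < 2 ^ (g+1) := Nat.lt_two_pow_self
    have : g ≤ 2 ^ (g+1) := by omega
    exact_mod_cast this
  have hg3 : (t * R : ℝ) ≤ 2 ^ (g+1) := (le_max_left _ _).trans hg2
  have hg4 : B / c ≤ 2 ^ (g+1) := (le_max_right _ _).trans hg2
  -- threshold for n
  have hlog : Filter.Tendsto (fun n : ℕ => Real.log n) Filter.atTop Filter.atTop :=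
    Real.tendsto_log_atTop.comp tendsto_natCast_atTop_atTop
  obtain ⟨N2, hN2⟩ := Filter.eventually_atTop.1
    (hlog.eventually_ge_atTop (8 * (2 * C + 1 + 2 * ((2 * K + 4 : ℕ) : ℝ))))
  set h := 3 * K + 5 with hh
  set N1 := N + N2 + 2 + R * 2^h with hN1
  -- threshold for x
  have ev : ∀ᶠ x : ℝ in Filter.atTop, 2 ≤ x ∧ (R:ℝ)^2 ≤ x ^ ((1:ℝ)/5) ∧ (R:ℝ) ≤ x ^ ((1:ℝ)/10) ∧
      ((N1:ℝ)+1)^h ≤ x ^ ((1:ℝ)/4) := by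
    refine (Filter.eventually_ge_atTop 2).and ?_
    refine ((tendsto_rpow_atTop (by norm_num)).eventually_ge_atTop _).and ?_
    refine ((tendsto_rpow_atTop (by norm_num)).eventually_ge_atTop _).and ?_
    exact (tendsto_rpow_atTop (by norm_num)).eventually_ge_atTop _
  obtain ⟨x₀, hx₀⟩ := Filter.eventually_atTop.1 ev
  refine ⟨g+1, by omega, max x₀ 1, by positivity, ?_⟩
  intro x q hx hq1 hq2
  obtain ⟨hx2, hxR, hxR', hxN⟩ := hx₀ x ((le_max_left _ _).trans hx)
  have hx0 : 0 < x := by linarith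
  have hqR : (R:ℝ)^2 ≤ q := by linarith
  have hq0 : 1 ≤ q := by nlinarith
  have hqpos : 0 < q := by linarith
  set z := Real.sqrt x / q with hz
  have hsq : Real.sqrt x = x ^ ((1:ℝ)/4) * x ^ ((1:ℝ)/4) := by
    rw [Real.sqrt_eq_rpow, ← Real.rpow_add hx0]; norm_num
  have hzx : x ^ ((1:ℝ)/4) ≤ z := by
    rw [hz, le_div_iff₀ hqpos, hsq]
    gcongr
  have hz0 : 0 < z := by positivity
  -- R √x ≤ q^3
  have hq3 : R * Real.sqrt x ≤ q^3 := by
    have e1 : (x ^ ((1:ℝ)/5))^3 = x ^ ((1:ℝ)/10) * Real.sqrt x := by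
      rw [Real.sqrt_eq_rpow, ← Real.rpow_add hx0, ← Real.rpow_natCast, ← Real.rpow_mul hx0.le]; norm_num
    have e2 : (x ^ ((1:ℝ)/5))^3 ≤ q^3 := by gcongr
    rw [e1] at e2
    refine le_trans ?_ e2
    gcongr
  have hRz : R * z ≤ q^2 := by
    rw [hz, mul_div_assoc', div_le_iff₀ hqpos]
    linarith
  have hRz2 : R * z ≤ Real.sqrt (x / q) := by
    apply Real.le_sqrt_of_sq_le
    rw [mul_pow, hz, div_pow, Real.sq_sqrt hx0.le]
    rw [mul_div_assoc', div_le_div_iff₀ (by positivity) hqpos]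
    have : (R:ℝ)^2 * x * q ≤ q * x * q := by gcongr
    linarith
  have hRzx : R * z ≤ x := by
    refine hRz2.trans ?_
    rw [Real.sqrt_le_left hx0.le]
    have : x / q ≤ x := div_le_self hx0.le hq0
    nlinarith
  -- choose n
  set n := ⌊z ^ (1/(h:ℝ))⌋₊ with hn
  have hh0 : (h:ℝ) ≠ 0 := by rw [hh]; positivity
  have hzpow : (z ^ (1/(h:ℝ)))^h = z := by
    rw [← Real.rpow_natCast, ← Real.rpow_mul hz0.le, one_div_mul_cancel hh0, Real.rpow_one]
  have hnz : (n:ℝ)^h ≤ z := by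
    rw [← hzpow]
    gcongr
    exact Nat.floor_le (by positivity)
  have hzn : z < ((n:ℝ)+1)^h := by
    rw [← hzpow]
    gcongr
    exact Nat.lt_floor_add_one _
  have hnN : N1 ≤ n := by
    by_contra hlt
    push Not at hlt
    have : ((n:ℝ)+1)^h ≤ ((N1:ℝ)+1)^h := by
      have : (n:ℝ) ≤ N1 := by exact_mod_cast hlt.le
      gcongr
    linarith
  have hn2 : 2 ≤ n := by rw [hN1] at hnN; omega
  have hnR : R * 2^h ≤ n := by rw [hN1] at hnN; omega
  have hnpos : (0:ℝ) < n := by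
    have : 0 < n := by omega
    exact_mod_cast this
  have hTT : c / B ≤ TT t n (2*K+4) (n^K * n^(2*K+4)) := by
    rw [div_le_iff₀ hB, mul_comm]
    exact (hlow n (by rw [hN1] at hnN; omega)).trans
      (hsh t n (n^K) hn2 (hN2 n (by rw [hN1] at hnN; omega)))
  have hRzn : R * z ≤ (n:ℝ)^(3*K+6) := by
    calc R * z ≤ R * (2 * n)^h := by
          gcongr
          refine hzn.le.trans ?_
          have : (2:ℝ) ≤ n := by exact_mod_cast hn2
          gcongr
          linarith
      _ = (R * 2^h) * (n:ℝ)^h := by rw [mul_pow]; ring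
      _ ≤ n * (n:ℝ)^h := by
          gcongr
          exact_mod_cast hnR
      _ = _ := by rw [hh]; ring
  set S := (AA t n).filter (fun a => a ≤ n^K * n^(2*K+4) ∧ 2*K+4 ≤ cntBig n a) with hS
  have prop : ∀ a ∈ S, a ∈ AA t n ∧ (0:ℝ) < a ∧ (n:ℝ) ≤ z / a ∧ R * z ≤ (a:ℝ)^2 := by
    intro a ha
    rw [hS, mem_filter] at ha
    obtain ⟨h1, h2, h3⟩ := ha
    have ha0 : (0:ℝ) < a := by exact_mod_cast AA_pos h1
    refine ⟨h1, ha0, ?_, ?_⟩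
    · rw [le_div_iff₀ ha0]
      refine le_trans ?_ hnz
      have : (a:ℝ) ≤ (n:ℝ)^K * (n:ℝ)^(2*K+4) := by exact_mod_cast h2
      calc (n:ℝ) * a ≤ n * ((n:ℝ)^K * (n:ℝ)^(2*K+4)) := by gcongr
        _ = (n:ℝ)^h := by rw [hh]; ring
    · refine hRzn.trans ?_
      have h4 := cntBig_le (AA_pos h1) h3 (by omega)
      have h5 : n^(3*K+6) ≤ a^2 := by
        rw [← Nat.pow_le_pow_iff_left (n := 2) (by norm_num), ← pow_mul, ← pow_mul]
        calc _ = n^(3*(2*K+4)) := by congr 1; ring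
          _ ≤ _ := h4
      exact_mod_cast h5
  set Q := S.sigma (fun a => PP R (z / a)) with hQ
  set target := {a : ℕ | 1 ≤ a ∧ z < (a : ℝ) ∧ (a : ℝ) ≤ Real.sqrt (x / q) ∧
        (Pmax a : ℝ) ≤ q ∧ (SS a : ℝ) ≤ 2 ^ (g+1) * Real.sqrt x / q} with htarget
  have pairs : ∀ y ∈ Q, y.1 ∈ S ∧ y.2.Prime ∧ z / y.1 < y.2 ∧ (y.2:ℝ) ≤ R * (z / y.1) := by
    rintro ⟨a, p⟩ hy
    rw [hQ, mem_sigma] at hy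
    have := (prop a hy.1)
    have hh := mem_PP (by positivity) hy.2
    exact ⟨hy.1, hh⟩
  have fin : target.Finite := by
    apply (Set.finite_Iic ⌊Real.sqrt (x / q)⌋₊).subset
    intro a ha
    exact Nat.le_floor ha.2.2.1
  have sub : ((Q.image (fun y => y.1 * y.2) : Finset ℕ) : Set ℕ) ⊆ target := by
    intro b hb
    rw [mem_coe, mem_image] at hb
    obtain ⟨⟨a, p⟩, hy, rfl⟩ := hb
    obtain ⟨h1, h2, h3, h4⟩ := pairs _ hy
    simp only at h1 h2 h3 h4 ⊢
    obtain ⟨h5, h6, h7, h8⟩ := prop a h1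
    have hp0 : (0:ℝ) < p := by exact_mod_cast h2.pos
    have hapR : (a:ℝ) * p ≤ R * z := by
      rw [mul_div_assoc', le_div_iff₀ h6] at h4
      linarith
    have hpa : (p:ℝ) ≤ a := by
      have : (p:ℝ) * a ≤ a * a := by
        calc (p:ℝ) * a = a * p := by ring
          _ ≤ R * z := hapR
          _ ≤ (a:ℝ)^2 := h8
          _ = a * a := by ring
      exact le_of_mul_le_mul_right this h6
    have hpa' : p ≤ a := by exact_mod_cast hpa
    have hnp : n < p := by
      have : (n:ℝ) < p := by linarith
      exact_mod_cast this
    have hpr : ∀ r, r.Prime → r ∣ a → r ≤ p := fun r hr hd =>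
      ((AA_primes h5 hr hd).trans hnp).le
    have hpq : (p:ℝ) ≤ q := by
      have : (p:ℝ)^2 ≤ q^2 := by
        calc (p:ℝ)^2 = p * p := by ring
          _ ≤ a * p := by gcongr
          _ ≤ R * z := hapR
          _ ≤ q^2 := hRz
      exact (pow_le_pow_iff_left₀ hp0.le hqpos.le (by norm_num)).1 this
    refine ⟨Nat.mul_pos (AA_pos h5) h2.pos, ?_, ?_, ?_, ?_⟩
    · rw [div_lt_iff₀ h6] at h3
      push_cast; linarith
    · push_cast; linarith
    · apply Pmax_le hq0
      intro r hr hd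
      refine le_trans ?_ hpq
      rcases (hr.dvd_mul).1 hd with hd | hd
      · exact_mod_cast hpr r hr hd
      · exact_mod_cast Nat.le_of_dvd h2.pos hd
    · have e1 : SS (a * p) ≤ t * (a * p) := SS_ext (AA_pos h5) h2 hpr (AA_SS ht h5)
        (hpa'.trans (Nat.le_mul_of_pos_left _ (by omega)))
      have e2 : (SS (a * p) : ℝ) ≤ t * (a * p) := by exact_mod_cast e1
      rw [mul_div_assoc]
      calc _ ≤ (t:ℝ) * (a * p) := e2
        _ ≤ t * (R * z) := by gcongr
        _ = (t * R) * z := by ring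
        _ ≤ _ := by gcongr
  have card1 : #Q ≤ target.ncard := by
    calc #Q = #(Q.image (fun y => y.1 * y.2)) := by
          rw [card_image_of_injOn]
          rintro ⟨a, p⟩ hy ⟨b, r⟩ hy' e
          simp only at e
          obtain ⟨h1, h2, h3, h4⟩ := pairs _ hy
          obtain ⟨h1', h2', h3', h4'⟩ := pairs _ hy'
          simp only at h1 h2 h3 h4 h1' h2' h3' h4'
          have hp := prop a h1
          have hp' := prop b h1'
          have hnp : n < p := by
            have : (n:ℝ) < p := by linarith
            exact_mod_cast this
          have hpr : p = r := by
            have hd : p ∣ b * r := by rw [← e]; exact Dvd.intro_left a rfl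
            rcases (h2.dvd_mul).1 hd with hd | hd
            · have := AA_primes hp'.1 h2 hd
              omega
            · exact (Nat.prime_dvd_prime_iff_eq h2 h2').1 hd
          subst hpr
          have := Nat.eq_of_mul_eq_mul_right h2.pos e
          subst this
          rfl
      _ = ((Q.image (fun y => y.1 * y.2) : Finset ℕ) : Set ℕ).ncard := by rw [Set.ncard_coe_finset]
      _ ≤ _ := Set.ncard_le_ncard sub fin
  have hlx : 0 < Real.log x := Real.log_pos (by linarith)
  have card2 : z * (c / B) ≤ Real.log x * #Q := by
    calc z * (c / B) ≤ z * TT t n (2*K+4) (n^K * n^(2*K+4)) := by gcongr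
      _ = ∑ a ∈ S, z / a := by
          unfold TT
          rw [mul_sum]
          apply sum_congr rfl
          intro a _
          ring
      _ ≤ ∑ a ∈ S, Real.log x * #(PP R (z / a)) := by
          apply sum_le_sum
          intro a ha
          obtain ⟨h5, h6, h7, h8⟩ := prop a ha
          have h1n : (1:ℝ) ≤ n := by
            have : 1 ≤ n := by omega
            exact_mod_cast this
          refine (PP_card hC hR1 hR (z / a) (h1n.trans h7)).trans ?_
          have ha1 : (1:ℝ) ≤ a := by exact_mod_cast AA_pos h5
          have : R * (z / a) ≤ x := by
            refine le_trans ?_ hRzx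
            gcongr
            exact div_le_self hz0.le ha1
          have : Real.log (R * (z / a)) ≤ Real.log x := Real.log_le_log (by positivity) this
          gcongr
      _ = _ := by
          rw [← mul_sum, hQ, card_sigma]
          push_cast
          rfl
  have card3 : (#Q : ℝ) ≤ target.ncard := by exact_mod_cast card1
  refine le_trans ?_ card3
  have hc2 : 1 / 2^(g+1) ≤ c / B := by
    rw [div_le_iff₀ hc] at hg4
    rw [div_le_div_iff₀ (by positivity) hB]
    linarith
  have e : Real.sqrt x / (2 ^ (g+1) * q * Real.log x) = z * (1 / 2^(g+1)) / Real.log x := by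
    rw [hz]; field_simp
  rw [e, div_le_iff₀ hlx]
  calc z * (1 / 2^(g+1)) ≤ z * (c / B) := by gcongr
    _ ≤ _ := by linarith

end Helpers

/-- There exist a positive integer `γ` and a positive real `x₀` such that for all
reals `x ≥ x₀` and `x^{1/5} < q ≤ x^{1/4}`, the number of positive integers `a` with
`√x/q < a ≤ √(x/q)`, `P(a) ≤ q` and `S(a) ≤ 2^γ √x/q` is at least `√x/(2^γ q log x)`. -/
theorem stmt_8 : ∃ γ : ℕ, 0 < γ ∧ ∃ x₀ : ℝ, 0 < x₀ ∧ ∀ x q : ℝ, x₀ ≤ x →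
    x ^ ((1 : ℝ) / 5) < q → q ≤ x ^ ((1 : ℝ) / 4) →
    Real.sqrt x / (2 ^ γ * q * Real.log x) ≤
      ({a : ℕ | 1 ≤ a ∧ Real.sqrt x / q < (a : ℝ) ∧ (a : ℝ) ≤ Real.sqrt (x / q) ∧
        (Pmax a : ℝ) ≤ q ∧ (SS a : ℝ) ≤ 2 ^ γ * Real.sqrt x / q}.ncard : ℝ) := 
  main_result
end

section
/- Let h : (0,∞) × [2,∞) → ℝ be a function, and let z ≥ 1 and M ≥ 1 be real numbers such that for all x > 0 and y ≥ 2 one has h(x,y) ≥ 1_{[1,∞)}(x) + Σ_{z < p ≤ min(y, √(x/M))} h(x/p, p), where the sum is over primes p. Then for all x > 0 and y ≥ 2, one has h(x,y) ≥ A(x/M, y, z). -/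
/-- `Axyz x y z = #{n ≥ 1 : n ≤ x, P(n) ≤ y, P⁻(n) > z and S(n) ≤ x}`
(the condition `P⁻(n) > z` is expressed as: every prime factor of `n` exceeds `z`,
which is vacuously true for `n = 1`, matching `P⁻(1) = +∞`). -/
noncomputable def Axyz (x y z : ℝ) : ℕ :=
  {n : ℕ | 1 ≤ n ∧ (n : ℝ) ≤ x ∧ (Pmax n : ℝ) ≤ y ∧
    (∀ p : ℕ, p.Prime → p ∣ n → z < (p : ℝ)) ∧ (SS n : ℝ) ≤ x}.ncard

theorem foldr_max_ge (l : List ℕ) (a : ℕ) (ha : a ∈ l) : a ≤ l.foldr max 1 := by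
  induction l with
  | nil => simp at ha
  | cons b t ih =>
    rcases List.mem_cons.1 ha with rfl | h
    · exact le_max_left _ _
    · exact (ih h).trans (le_max_right _ _)

theorem foldr_max_mem (l : List ℕ) : l.foldr max 1 = 1 ∨ l.foldr max 1 ∈ l := by
  induction l with
  | nil => simp
  | cons b t ih =>
    simp only [List.foldr_cons]
    rcases max_choice b (t.foldr max 1) with h | h
    · rw [h]; right; simp
    · rw [h]; rcases ih with h | h
      · left; exact h
      · right; exact List.mem_cons_of_mem _ h

theorem pfl_mul (m p : ℕ) (hm : m ≠ 0) (hp : p.Prime) (h : ∀ q, q.Prime → q ∣ m → q ≤ p) :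
    (p * m).primeFactorsList = m.primeFactorsList ++ [p] := by
  apply List.Perm.eq_of_sortedLE (Nat.primeFactorsList_sorted _)
  · apply List.Pairwise.sortedLE
    rw [List.pairwise_append]
    refine ⟨(Nat.primeFactorsList_sorted m).pairwise, by simp, ?_⟩
    intro a ha b hb
    rw [List.mem_singleton.1 hb]
    exact h a (Nat.prime_of_mem_primeFactorsList ha) (Nat.dvd_of_mem_primeFactorsList ha)
  · refine (Nat.perm_primeFactorsList_mul hp.ne_zero hm).trans ?_
    rw [Nat.primeFactorsList_prime hp]
    exact List.perm_append_comm

theorem SS_mul_s9 (m p : ℕ) (hm : m ≠ 0) (hp : p.Prime) (h : ∀ q, q.Prime → q ∣ m → q ≤ p) :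
    p * p ≤ SS (p * m) ∧ p * SS m ≤ SS (p * m) := by
  have e := pfl_mul m p hm hp h
  have h1 : p * p ≤ SS (p * m) := by
    unfold SS
    apply foldr_max_ge
    rw [List.mem_map]
    refine ⟨m.primeFactorsList.length, ?_, ?_⟩
    · rw [e]; simp
    · rw [e]; simp
  refine ⟨h1, ?_⟩
  rcases foldr_max_mem ((List.range m.primeFactorsList.length).map
    (fun j => (m.primeFactorsList.drop j).headI * (m.primeFactorsList.drop j).prod)) with h2 | h2
  · have : SS m = 1 := h2
    rw [this]
    exact le_trans (Nat.mul_le_mul_left _ hp.one_le) h1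
  · change SS m ∈ _ at h2
    obtain ⟨j, hj, hj2⟩ := List.mem_map.1 h2
    rw [List.mem_range] at hj
    rw [← hj2]
    conv_rhs => unfold SS
    apply foldr_max_ge
    rw [List.mem_map]
    refine ⟨j, ?_, ?_⟩
    · rw [e]; simp; omega
    · rw [e, List.drop_append_of_le_length hj.le, List.drop_eq_getElem_cons hj]
      simp only [List.cons_append, List.headI_cons, List.prod_cons, List.prod_append,
        List.prod_nil]
      ring

theorem Pmax_le_s9 (n p : ℕ) (hp : 1 ≤ p) (h : ∀ q, q.Prime → q ∣ n → q ≤ p) : Pmax n ≤ p := by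
  unfold Pmax
  split_ifs
  · exact hp
  · apply Finset.sup_le
    intro q hq
    exact h q (Nat.prime_of_mem_primeFactors hq) (Nat.dvd_of_mem_primeFactors hq)

theorem le_Pmax (n q : ℕ) (hn : 2 ≤ n) (hq : q.Prime) (h : q ∣ n) : q ≤ Pmax n := by
  unfold Pmax
  rw [if_neg (by omega)]
  exact Finset.le_sup (f := id) (Nat.mem_primeFactors.2 ⟨hq, h, by omega⟩)

theorem Pmax_spec (n : ℕ) (hn : 2 ≤ n) : (Pmax n).Prime ∧ Pmax n ∣ n := by
  unfold Pmax
  rw [if_neg (by omega)]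
  obtain ⟨i, hi, hi2⟩ := Finset.exists_mem_eq_sup n.primeFactors
    (Nat.nonempty_primeFactors.2 (by omega)) id
  rw [hi2]
  exact ⟨Nat.prime_of_mem_primeFactors hi, Nat.dvd_of_mem_primeFactors hi⟩

def ASet (x y z : ℝ) : Set ℕ := {n : ℕ | 1 ≤ n ∧ (n : ℝ) ≤ x ∧ (Pmax n : ℝ) ≤ y ∧
    (∀ p : ℕ, p.Prime → p ∣ n → z < (p : ℝ)) ∧ (SS n : ℝ) ≤ x}

theorem ASet_finite (x y z : ℝ) : (ASet x y z).Finite := by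
  apply (Set.finite_Iic ⌊x⌋₊).subset
  intro n hn
  exact Nat.le_floor hn.2.1

theorem ASet_sub (x y z : ℝ) : ASet x y z ⊆ ({1} : Set ℕ) ∪
    ⋃ p ∈ (Finset.range (⌊min y (Real.sqrt x)⌋₊ + 1)).filter
      (fun p : ℕ => p.Prime ∧ z < (p : ℝ) ∧ (p : ℝ) ≤ min y (Real.sqrt x)),
      (fun m => p * m) '' ASet (x / p) p z := by
  rintro n ⟨h1, h2, h3, h4, h5⟩
  rcases h1.eq_or_lt with h1 | h1
  · left; simp [← h1]
  right
  obtain ⟨hp, hd⟩ := Pmax_spec n h1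
  have hle := fun q => le_Pmax n q h1
  generalize Pmax n = p at *
  obtain ⟨m, rfl⟩ := hd
  have hm : m ≠ 0 := by rintro rfl; simp at h1
  have hle' : ∀ q, q.Prime → q ∣ m → q ≤ p := fun q hq hqm => hle q hq (hqm.mul_left p)
  obtain ⟨s1, s2⟩ := SS_mul_s9 m p hm hp hle'
  have hp0 : (0 : ℝ) < p := by exact_mod_cast hp.pos
  have s1' : (p : ℝ) * p ≤ x := le_trans (by exact_mod_cast s1) h5
  have s2' : (p : ℝ) * SS m ≤ x := le_trans (by exact_mod_cast s2) h5
  have hmin : (p : ℝ) ≤ min y (Real.sqrt x) :=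
    le_min h3 (Real.le_sqrt_of_sq_le (by rw [sq]; exact s1'))
  simp only [Set.mem_iUnion]
  refine ⟨p, ?_, m, ?_, rfl⟩
  · rw [Finset.mem_filter, Finset.mem_range]
    exact ⟨Nat.lt_succ_of_le (Nat.le_floor hmin), hp, h4 p hp (dvd_mul_right _ _), hmin⟩
  · refine ⟨Nat.pos_of_ne_zero hm, ?_, ?_, ?_, ?_⟩
    · rw [le_div_iff₀ hp0]; push_cast at h2; linarith
    · exact_mod_cast Pmax_le_s9 m p hp.one_le hle'
    · exact fun q hq hqm => h4 q hq (hqm.mul_left p)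
    · rw [le_div_iff₀ hp0]; linarith

theorem Axyz_le (x y z : ℝ) : Axyz x y z ≤ 1 +
    ∑ p ∈ (Finset.range (⌊min y (Real.sqrt x)⌋₊ + 1)).filter
      (fun p : ℕ => p.Prime ∧ z < (p : ℝ) ∧ (p : ℝ) ≤ min y (Real.sqrt x)),
      Axyz (x / p) p z := by
  change (ASet x y z).ncard ≤ _
  refine (Set.ncard_le_ncard (ASet_sub x y z) ?_).trans ?_
  · apply (Set.finite_singleton 1).union
    apply Set.Finite.biUnion (Finset.finite_toSet _)
    intro p _
    exact (ASet_finite _ _ _).image _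
  refine (Set.ncard_union_le _ _).trans ?_
  rw [Set.ncard_singleton]
  apply Nat.add_le_add_left
  refine (Finset.set_ncard_biUnion_le _ _).trans ?_
  apply Finset.sum_le_sum
  intro p _
  exact Set.ncard_image_le (ASet_finite _ _ _)

/-- Discrete bidimensional Gronwall lemma: if `h` satisfies the Buchstab-type
inequality `h(x,y) ≥ 1_{[1,∞)}(x) + Σ_{z < p ≤ min(y, √(x/M))} h(x/p, p)` for all
`x > 0`, `y ≥ 2` (sum over primes `p`), where `z ≥ 1` and `M ≥ 1`, then
`h(x,y) ≥ A(x/M, y, z)` for all `x > 0`, `y ≥ 2`. -/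
theorem stmt_9 (h : ℝ → ℝ → ℝ) (z M : ℝ) (hz : 1 ≤ z) (hM : 1 ≤ M)
    (hyp : ∀ x y : ℝ, 0 < x → 2 ≤ y →
      (if (1 : ℝ) ≤ x then (1 : ℝ) else 0) +
          ∑ p ∈ (Finset.range (⌊min y (Real.sqrt (x / M))⌋₊ + 1)).filter
              (fun p : ℕ => p.Prime ∧ z < (p : ℝ) ∧ (p : ℝ) ≤ min y (Real.sqrt (x / M))),
            h (x / p) p ≤ h x y) :
    ∀ x y : ℝ, 0 < x → 2 ≤ y → (Axyz (x / M) y z : ℝ) ≤ h x y := by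
  have key : ∀ N : ℕ, ∀ x y : ℝ, 0 < x → 2 ≤ y → x / M < 2 ^ N →
      (Axyz (x / M) y z : ℝ) ≤ h x y := by
    have hM0 : 0 < M := by linarith
    intro N
    induction N with
    | zero =>
      intro x y hx hy hN
      rw [pow_zero] at hN
      have h0 : Axyz (x / M) y z = 0 := by
        change (ASet (x / M) y z).ncard = 0
        have : ASet (x / M) y z = ∅ := by
          ext n
          simp only [Set.mem_empty_iff_false, iff_false]
          rintro ⟨h1, h2, -⟩
          have : (1 : ℝ) ≤ n := by exact_mod_cast h1
          linarith
        rw [this, Set.ncard_empty]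
      rw [h0]
      have := hyp x y hx hy
      rw [Finset.sum_eq_zero] at this
      · split_ifs at this <;> simp <;> linarith
      · intro p hp
        exfalso
        rw [Finset.mem_filter] at hp
        obtain ⟨-, hp, -, hp2⟩ := hp
        have h1 : (p : ℝ) ≤ Real.sqrt (x / M) := hp2.trans (min_le_right _ _)
        have h2 : Real.sqrt (x / M) ≤ 1 := Real.sqrt_le_one.2 hN.le
        have h3 : (2 : ℝ) ≤ p := by exact_mod_cast hp.two_le
        linarith
    | succ N ih =>
      intro x y hx hy hN
      by_cases hsmall : x / M < 2 ^ N
      · exact ih x y hx hy hsmall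
      have hx1 : 1 ≤ x := by
        have h1 : (1 : ℝ) ≤ 2 ^ N := one_le_pow₀ (by norm_num)
        have h2 : 1 ≤ x / M := by linarith [not_lt.1 hsmall]
        rw [le_div_iff₀ hM0] at h2
        linarith
      have := hyp x y hx hy
      rw [if_pos hx1] at this
      refine le_trans ?_ this
      refine (Nat.cast_le.2 (Axyz_le (x / M) y z)).trans ?_
      push_cast
      refine add_le_add_right (Finset.sum_le_sum ?_) 1
      intro p hp
      rw [Finset.mem_filter] at hp
      obtain ⟨-, hp, -, -⟩ := hp
      have h3 : (2 : ℝ) ≤ p := by exact_mod_cast hp.two_le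
      have hp0 : (0 : ℝ) < p := by linarith
      rw [div_right_comm]
      apply ih _ _ (div_pos hx hp0) h3
      rw [div_right_comm, div_lt_iff₀ hp0]
      rw [pow_succ] at hN
      have : (0 : ℝ) < 2 ^ N := by positivity
      nlinarith
  intro x y hx hy
  obtain ⟨N, hN⟩ := pow_unbounded_of_one_lt (x / M) (one_lt_two)
  exact key N x y hx hy hN
end

section
/- Let E be a nonempty finite set partitioned into classes E₁, …, E_k, and let n = |E|. Then the following are equivalent: (i) the elements of E can be ordered as e₁, e₂, …, e_n such that no two consecutive elements e_i, e_{i+1} (1 ≤ i < n) belong to the same class E_j; (ii) max_{1 ≤ j ≤ k} |E_j| ≤ (n+1)/2. -/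
theorem aux_nec {α ι : Type*} [DecidableEq ι] (c : α → ι) (i : ι) :
    ∀ l : List α, l.IsChain (fun a b => c a ≠ c b) →
      2 * (l.filter (fun e => c e = i)).length ≤ l.length + 1
  | [], _ => by simp
  | [a], _ => by
      by_cases h : c a = i <;> simp [h]
  | a :: b :: l, h => by
      rw [List.isChain_cons_cons] at h
      have ih := aux_nec c i l h.2.tail
      have h1 := h.1
      by_cases ha : c a = i <;> by_cases hb : c b = i
      · exact absurd (ha.trans hb.symm) h1
      all_goals
        simp [ha, hb]
        omega

theorem aux_suf {α ι : Type*} [DecidableEq α] [DecidableEq ι] (c : α → ι) :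
    ∀ (n : ℕ) (E : Finset α) (o : Option ι), E.card = n →
      (∀ i, 2 * (E.filter (fun e => c e = i)).card ≤ n + 1) →
      (∀ j ∈ o, 2 * (E.filter (fun e => c e = j)).card ≤ n) →
      ∃ l : List α, l.Nodup ∧ l.toFinset = E ∧ l.IsChain (fun a b => c a ≠ c b) ∧
        ∀ b ∈ l.head?, c b ∉ o := by
  intro n
  induction n with
  | zero =>
    intro E o hE _ _
    refine ⟨[], by simp, ?_, by simp, by simp⟩
    rw [Finset.card_eq_zero] at hE
    simp [hE]
  | succ n ih =>
    intro E o hE h1 h2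
    have key : ∃ a ∈ E, c a ∉ o ∧
        ∀ m, m ≠ c a → 2 * (E.filter (fun e => c e = m)).card ≤ n + 1 := by
      by_cases hbig : ∃ i, 2 * (E.filter (fun e => c e = i)).card = n + 2
      · obtain ⟨i, hi⟩ := hbig
        have hpos : 0 < (E.filter (fun e => c e = i)).card := by omega
        obtain ⟨a, ha⟩ := Finset.card_pos.mp hpos
        rw [Finset.mem_filter] at ha
        refine ⟨a, ha.1, ?_, ?_⟩
        · intro hm
          have := h2 _ hm
          rw [ha.2] at this
          omega
        · intro m hm
          rw [ha.2] at hm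
          have hd : Disjoint (E.filter (fun e => c e = m)) (E.filter (fun e => c e = i)) := by
            rw [Finset.disjoint_left]
            intro x hx hy
            rw [Finset.mem_filter] at hx hy
            exact hm (hx.2.symm.trans hy.2)
          have hu := Finset.card_union_of_disjoint hd
          have hle : (E.filter (fun e => c e = m) ∪ E.filter (fun e => c e = i)).card ≤ E.card :=
            Finset.card_le_card
              (Finset.union_subset (Finset.filter_subset _ _) (Finset.filter_subset _ _))
          omega
      · push Not at hbig
        have hall : ∀ m, 2 * (E.filter (fun e => c e = m)).card ≤ n + 1 := by
          intro m
          have := h1 m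
          have := hbig m
          omega
        suffices hs : ∃ a ∈ E, c a ∉ o by
          obtain ⟨a, ha, hao⟩ := hs
          exact ⟨a, ha, hao, fun m _ => hall m⟩
        by_contra hcon
        push Not at hcon
        have hne : E.Nonempty := by
          rw [← Finset.card_pos]
          omega
        obtain ⟨a, ha⟩ := hne
        have hao := hcon a ha
        have hf : E.filter (fun e => c e = c a) = E := by
          rw [Finset.filter_eq_self]
          intro x hx
          exact Option.mem_unique (hcon x hx) hao
        have := h2 _ hao
        rw [hf] at this
        omega
    obtain ⟨a, ha, hao, hm⟩ := key
    have hcard : (E.erase a).card = n := by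
      rw [Finset.card_erase_of_mem ha]
      omega
    have hself : 2 * ((E.erase a).filter (fun e => c e = c a)).card ≤ n := by
      rw [Finset.filter_erase, Finset.card_erase_of_mem (by simp [ha])]
      have := h1 (c a)
      omega
    obtain ⟨l, hl1, hl2, hl3, hl4⟩ := ih (E.erase a) (some (c a)) hcard (by
      intro i
      by_cases hi : i = c a
      · subst hi
        omega
      · have := hm i hi
        have hle : ((E.erase a).filter (fun e => c e = i)).card
            ≤ (E.filter (fun e => c e = i)).card :=
          Finset.card_le_card (Finset.filter_subset_filter _ (Finset.erase_subset _ _))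
        omega) (by
      intro j hj
      rw [Option.mem_some_iff] at hj
      rw [← hj]
      exact hself)
    refine ⟨a :: l, ?_, ?_, ?_, ?_⟩
    · rw [List.nodup_cons]
      refine ⟨?_, hl1⟩
      rw [← List.mem_toFinset, hl2]
      simp
    · rw [List.toFinset_cons, hl2, Finset.insert_erase ha]
    · rw [List.isChain_cons]
      refine ⟨?_, hl3⟩
      intro b hb heq
      apply hl4 b hb
      rw [heq]
      exact Option.mem_some_self _
    · intro b hb
      simp only [List.head?_cons, Option.mem_some_iff] at hb
      rw [← hb]
      exact hao


/-- Let `E` be a nonempty finite set partitioned into classes (the fibers of `c`),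
and `n = |E|`. Then the elements of `E` can be ordered as `e₁, …, e_n` with no two
consecutive elements in the same class if and only if every class has cardinality
at most `(n+1)/2`. -/
theorem stmt_10 {α ι : Type*} [DecidableEq α] [DecidableEq ι]
    (E : Finset α) (hE : E.Nonempty) (c : α → ι) :
    (∃ l : List α, l.Nodup ∧ l.toFinset = E ∧ l.Chain' (fun a b => c a ≠ c b)) ↔
      ∀ i : ι, ((E.filter (fun e => c e = i)).card : ℝ) ≤ ((E.card : ℝ) + 1) / 2 := by
  constructor
  · rintro ⟨l, hn, rfl, hc⟩ i
    have h := aux_nec c i l hc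
    have e1 : (l.toFinset.filter (fun e => c e = i)).card
        = (l.filter (fun e => c e = i)).length := by
      rw [← List.toFinset_card_of_nodup (hn.filter _), List.toFinset_filter]
      simp
    rw [e1, List.toFinset_card_of_nodup hn]
    have h' : (2 : ℝ) * ((l.filter (fun e => c e = i)).length : ℝ) ≤ (l.length : ℝ) + 1 := by
      exact_mod_cast h
    linarith
  · intro h
    obtain ⟨l, h1, h2, h3, _⟩ := aux_suf c E.card E none rfl (by
      intro i
      have h' : (2 : ℝ) * ((E.filter (fun e => c e = i)).card : ℝ) ≤ (E.card : ℝ) + 1 := by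
        linarith [h i]
      exact_mod_cast h') (by simp)
    exact ⟨l, h1, h2, h3⟩
end

section
/- Let q ∈ {2, 3}, and let x, y be real numbers with y ≥ 3 and x ≥ 3^{10}. Let A be an integer of 𝒜*(x,y) such that q < P(A) ≤ √x/27 and P⁻(A) ≥ q. Then there exists a chain A = a₁ − a₂ − ⋯ − a_s of at least two integers of 𝒜*(x,y) such that: P(a_j) = P(A) for all 1 ≤ j < s; P(a_s) = q; P⁻(a_j) ≥ q for all 1 ≤ j ≤ s; a_{s−1} > √(x·P(a_{s−1})); P(a_{s−1}/P(a_{s−1})) ≤ √(x/P(a_{s−1}))/27; and a_s > 3√x. -/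
/-- `n ∈ 𝒜*(x,y)`, i.e. `n ≥ 1`, `n > √x`, `P(n) ≤ min(y, √x/27)` and `S(n) ≤ x`. -/
def AstarMem (x y : ℝ) (n : ℕ) : Prop :=
  1 ≤ n ∧ Real.sqrt x < (n : ℝ) ∧ (Pmax n : ℝ) ≤ min y (Real.sqrt x / 27) ∧ (SS n : ℝ) ≤ x

theorem aux_SS_mul (r m : ℕ) (hr : r.Prime) (hm : 0 < m)
    (h : ∀ t : ℕ, t.Prime → t ∣ m → r ≤ t) : SS (r * m) = max (r * (r * m)) (SS m) := by
  have h1 : (r * m).primeFactorsList = r :: m.primeFactorsList := by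
    have hmf : (r * m).minFac = r := by
      apply le_antisymm
      · exact Nat.minFac_le_of_dvd hr.two_le (Dvd.intro _ rfl)
      · have hp : (r * m).minFac.Prime := Nat.minFac_prime (by
          have := hr.two_le
          nlinarith)
        rcases (hp.dvd_mul).1 (Nat.minFac_dvd (r * m)) with h2 | h2
        · exact ((Nat.prime_dvd_prime_iff_eq hp hr).1 h2).ge
        · exact h _ hp h2
    obtain ⟨k, hk⟩ : ∃ k, r * m = k + 2 := ⟨r * m - 2, by
      have := hr.two_le
      have : 2 ≤ r * m := by nlinarith
      omega⟩
    rw [hk, Nat.primeFactorsList, ← hk, hmf, Nat.mul_div_cancel_left _ hr.pos]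
  have h2 : (m.primeFactorsList).prod = m := Nat.prod_primeFactorsList hm.ne'
  unfold SS
  rw [h1, List.length_cons, List.range_succ_eq_map]
  simp [h2, Function.comp_def]

theorem aux_SS_pow (q D g : ℕ) (x : ℝ) (hq : q.Prime) (hD : 0 < D)
    (h : ∀ t : ℕ, t.Prime → t ∣ D → q ≤ t) (hS : (SS D : ℝ) ≤ x)
    (hg : (q : ℝ) ^ (g + 1) * D ≤ x) : (SS (q ^ g * D) : ℝ) ≤ x := by
  induction g with
  | zero => simpa using hS
  | succ g ih =>
    have hq1 : (1 : ℝ) ≤ q := by exact_mod_cast hq.one_le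
    rw [pow_succ', mul_assoc, aux_SS_mul q _ hq (by have := hq.pos; positivity)]
    · rw [Nat.cast_max]
      apply max_le
      · push_cast
        calc _ = (q : ℝ) ^ (g + 1 + 1) * D := by ring
          _ ≤ x := hg
      · apply ih
        refine le_trans ?_ hg
        gcongr
        · omega
    · intro t ht htd
      rcases (ht.dvd_mul).1 htd with h2 | h2
      · exact ((Nat.prime_dvd_prime_iff_eq ht hq).1 (ht.dvd_of_dvd_pow h2)).ge
      · exact h t ht h2

theorem aux_Pmax_eq (n p : ℕ) (hn : 0 < n) (hp : p.Prime) (hpn : p ∣ n)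
    (h : ∀ t : ℕ, t.Prime → t ∣ n → t ≤ p) : Pmax n = p := by
  have h2 : ¬ n ≤ 1 := by
    have := Nat.le_of_dvd hn hpn
    have := hp.two_le
    omega
  rw [Pmax, if_neg h2]
  apply le_antisymm
  · apply Finset.sup_le
    intro t ht
    exact h t (Nat.prime_of_mem_primeFactors ht) (Nat.dvd_of_mem_primeFactors ht)
  · exact Finset.le_sup (f := id) (Nat.mem_primeFactors.2 ⟨hp, hpn, hn.ne'⟩)

theorem aux_Pmax_spec (n : ℕ) (hn : 1 < Pmax n) : 0 < n ∧ (Pmax n).Prime ∧ Pmax n ∣ n ∧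
    ∀ t : ℕ, t.Prime → t ∣ n → t ≤ Pmax n := by
  have h2 : ¬ n ≤ 1 := by
    intro h
    rw [Pmax, if_pos h] at hn
    omega
  have h3 : Pmax n = n.primeFactors.sup id := by rw [Pmax, if_neg h2]
  have hne : n.primeFactors.Nonempty := Nat.nonempty_primeFactors.2 (by omega)
  obtain ⟨t, ht, hte⟩ := Finset.exists_mem_eq_sup n.primeFactors hne id
  simp only [id] at hte
  refine ⟨by omega, ?_, ?_, ?_⟩
  · rw [h3]; erw [hte]; exact Nat.prime_of_mem_primeFactors ht
  · rw [h3]; erw [hte]; exact Nat.dvd_of_mem_primeFactors ht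
  · intro t ht htn
    rw [h3]
    exact Finset.le_sup (f := id) (Nat.mem_primeFactors.2 ⟨ht, htn, by omega⟩)

/-- The conditions on all terms of the chain but the last. -/
def AuxGood (x y : ℝ) (p q n : ℕ) : Prop :=
  AstarMem x y n ∧ Pmax n = p ∧ ∀ r : ℕ, r.Prime → r ∣ n → q ≤ r

/-- The divisor graph on the good integers. -/
def auxGraph (x y : ℝ) (p q : ℕ) : SimpleGraph ℕ where
  Adj a b := a ≠ b ∧ AuxGood x y p q a ∧ AuxGood x y p q b ∧ (a ∣ b ∨ b ∣ a)
  symm := ⟨fun _ _ h => ⟨h.1.symm, h.2.2.1, h.2.1, h.2.2.2.symm⟩⟩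
  loopless := ⟨fun _ h => h.1 rfl⟩

theorem aux_reach (x y : ℝ) (p q a b : ℕ) (ha : AuxGood x y p q a) (hb : AuxGood x y p q b)
    (h : a ∣ b ∨ b ∣ a) : (auxGraph x y p q).Reachable a b := by
  by_cases hab : a = b
  · subst hab
    exact SimpleGraph.Reachable.refl _
  · exact SimpleGraph.Adj.reachable ⟨hab, ha, hb, h⟩

/-- Invariant of the prefix. -/
def AuxH (x : ℝ) (p q D : ℕ) : Prop :=
  0 < D ∧ p ∣ D ∧ (∀ r : ℕ, r.Prime → r ∣ D → q ≤ r ∧ r ≤ p) ∧ (SS D : ℝ) ≤ x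

theorem aux_good (x y : ℝ) (p q D g : ℕ) (hp : p.Prime) (hq : q.Prime) (hqp : q < p)
    (hpm : (p : ℝ) ≤ min y (Real.sqrt x / 27)) (hH : AuxH x p q D)
    (h1 : Real.sqrt x < (q : ℝ) ^ g * D) (h2 : (q : ℝ) ^ (g + 1) * D ≤ x) :
    AuxGood x y p q (q ^ g * D) := by
  obtain ⟨hD, hpD, hr, hS⟩ := hH
  have hpos : 0 < q ^ g * D := by have := hq.pos; positivity
  have hall : ∀ r : ℕ, r.Prime → r ∣ q ^ g * D → q ≤ r ∧ r ≤ p := by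
    intro r hrp hrd
    rcases (hrp.dvd_mul).1 hrd with h3 | h3
    · have := (Nat.prime_dvd_prime_iff_eq hrp hq).1 (hrp.dvd_of_dvd_pow h3)
      omega
    · exact hr r hrp h3
  have hP : Pmax (q ^ g * D) = p :=
    aux_Pmax_eq _ _ hpos hp (hpD.mul_left _) (fun t ht htd => (hall t ht htd).2)
  refine ⟨⟨hpos, by push_cast; exact h1, by rw [hP]; exact hpm, ?_⟩, hP,
    fun t ht htd => (hall t ht htd).1⟩
  exact aux_SS_pow q D g x hq hD (fun t ht htd => (hr t ht htd).1) hS h2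

theorem aux_max (x : ℝ) (q D g : ℕ) (hq : q.Prime) (hD : 0 < D)
    (h : (q : ℝ) ^ (g + 1) * D ≤ x) :
    ∃ e, g ≤ e ∧ (q : ℝ) ^ (e + 1) * D ≤ x ∧ x < (q : ℝ) ^ (e + 2) * D := by
  have hq1 : (1 : ℝ) < q := by exact_mod_cast hq.one_lt
  have hD' : (0 : ℝ) < D := by exact_mod_cast hD
  have hpos : 0 < (q : ℝ) ^ (g + 1) * D := by positivity
  obtain ⟨n, hn1, hn2⟩ := exists_nat_pow_near ((one_le_div hpos).2 h) hq1
  rw [le_div_iff₀ hpos] at hn1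
  rw [div_lt_iff₀ hpos] at hn2
  refine ⟨g + n, by omega, ?_, ?_⟩
  · calc _ = (q : ℝ) ^ n * (q ^ (g + 1) * D) := by ring
      _ ≤ x := hn1
  · calc x < (q : ℝ) ^ (n + 1) * (q ^ (g + 1) * D) := hn2
      _ = _ := by ring

theorem aux_big (x q r m : ℝ) (hx : 0 < x) (hq0 : 0 ≤ q) (hq : q ≤ 3) (hm : 0 ≤ m)
    (hr0 : 0 ≤ r) (hr : r ≤ Real.sqrt x / 27) (h : x < q ^ 2 * r * m) :
    3 * Real.sqrt x < m := by
  have hs : 0 < Real.sqrt x := Real.sqrt_pos.2 hx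
  have hss : Real.sqrt x * Real.sqrt x = x := Real.mul_self_sqrt hx.le
  have h2 : q ^ 2 * r * m ≤ 3 ^ 2 * (Real.sqrt x / 27) * m := by gcongr
  by_contra hc
  push Not at hc
  nlinarith

theorem aux_main (x y : ℝ) (p q e : ℕ) (hx : 0 < x) (hp : p.Prime) (hq : q.Prime)
    (hq3 : q ≤ 3) (hqp : q < p) (hpm : (p : ℝ) ≤ min y (Real.sqrt x / 27))
    (he : x < (q : ℝ) ^ (e + 2) * p) (hgood : AuxGood x y p q (q ^ e * p)) :
    ∀ D : ℕ, AuxH x p q D → ∀ g : ℕ, Real.sqrt x < (q : ℝ) ^ g * D →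
      (q : ℝ) ^ (g + 1) * D ≤ x →
      (auxGraph x y p q).Reachable (q ^ g * D) (q ^ e * p) := by
  have hq1 : (1 : ℝ) < q := by exact_mod_cast hq.one_lt
  intro D
  induction D using Nat.strong_induction_on with
  | _ D ih =>
  intro hH g hg1 hg2
  have hG := aux_good x y p q D g hp hq hqp hpm hH hg1 hg2
  by_cases hDp : D = p
  · subst hDp
    apply aux_reach _ _ _ _ _ _ hG hgood
    left
    apply Nat.mul_dvd_mul_right
    apply pow_dvd_pow
    have h1 := lt_of_le_of_lt hg2 he
    have h2 := lt_of_mul_lt_mul_right h1 (Nat.cast_nonneg _)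
    have h3 := (pow_lt_pow_iff_right₀ hq1).1 h2
    omega
  obtain ⟨hD, hpD, hr, hS⟩ := id hH
  have hD1 : D ≠ 1 := by
    rintro rfl
    exact hp.one_lt.ne' (Nat.dvd_one.1 hpD)
  have hrp := Nat.minFac_prime hD1
  obtain ⟨D', hD'⟩ := Nat.minFac_dvd D
  have hmin : ∀ t : ℕ, t.Prime → t ∣ D → D.minFac ≤ t :=
    fun t ht htd => Nat.minFac_le_of_dvd ht.two_le htd
  have hr' := hr _ hrp (Nat.minFac_dvd D)
  generalize D.minFac = r at *
  have hD'0 : 0 < D' := by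
    rcases Nat.eq_zero_or_pos D' with h | h
    · subst h; omega
    · exact h
  have hdvd : D' ∣ D := ⟨r, by rw [hD', mul_comm]⟩
  have hlt : D' < D := by
    have := hrp.two_le
    nlinarith
  have hpD' : p ∣ D' := by
    by_cases hrp' : r = p
    · have hne : D' ≠ 1 := by
        rintro rfl
        apply hDp
        rw [hD', hrp', mul_one]
      have ht := Nat.minFac_prime hne
      have htd := (Nat.minFac_dvd D').trans hdvd
      have h1 := hmin _ ht htd
      have h2 := (hr _ ht htd).2
      have h3 : D'.minFac = p := by omega
      rw [← h3]
      exact Nat.minFac_dvd D'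
    · rw [hD'] at hpD
      rcases (hp.dvd_mul).1 hpD with h | h
      · exact absurd ((Nat.prime_dvd_prime_iff_eq hp hrp).1 h).symm hrp'
      · exact h
  have hSS := aux_SS_mul r D' hrp hD'0 (fun t ht htd => hmin t ht (htd.trans hdvd))
  rw [← hD'] at hSS
  have hH' : AuxH x p q D' := by
    refine ⟨hD'0, hpD', fun t ht htd => hr t ht (htd.trans hdvd), le_trans ?_ hS⟩
    rw [hSS]
    exact_mod_cast le_max_right _ _
  obtain ⟨g', hgg, hg'1, hg'2⟩ := aux_max x q D g hq hD hg2
  have hDr : (D : ℝ) = r * D' := by rw [hD']; push_cast; ring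
  have hG' : AuxGood x y p q (q ^ g' * D) := by
    apply aux_good x y p q D g' hp hq hqp hpm hH _ hg'1
    refine lt_of_lt_of_le hg1 ?_
    gcongr
    exact hq1.le
  have hs : 0 < Real.sqrt x := Real.sqrt_pos.2 hx
  have hbig : 3 * Real.sqrt x < (q : ℝ) ^ g' * D' := by
    apply aux_big x q r _ hx (by positivity) (by exact_mod_cast hq3) (by positivity)
      (by positivity)
    · refine le_trans ?_ (hpm.trans (min_le_right _ _))
      exact_mod_cast hr'.2
    · calc x < _ := hg'2
        _ = _ := by rw [hDr]; ring
  have h1' : Real.sqrt x < (q : ℝ) ^ g' * D' := by linarith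
  have h2' : (q : ℝ) ^ (g' + 1) * D' ≤ x := by
    refine le_trans ?_ hg'1
    have : (D' : ℝ) ≤ D := by exact_mod_cast hlt.le
    gcongr
  have hG'' := aux_good x y p q D' g' hp hq hqp hpm hH' h1' h2'
  refine (aux_reach _ _ _ _ _ _ hG hG' (Or.inl ?_)).trans
    ((aux_reach _ _ _ _ _ _ hG' hG'' (Or.inr ?_)).trans (ih D' hlt hH' g' h1' h2'))
  · exact Nat.mul_dvd_mul_right (pow_dvd_pow _ hgg) _
  · exact Nat.mul_dvd_mul_left _ hdvd

theorem aux_SS_ge (D q : ℕ) (hD : 1 < D) (h : ∀ t : ℕ, t.Prime → t ∣ D → q ≤ t) :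
    q * D ≤ SS D := by
  have hrp := Nat.minFac_prime hD.ne'
  obtain ⟨D', hD'⟩ := Nat.minFac_dvd D
  have hmin : ∀ t : ℕ, t.Prime → t ∣ D → D.minFac ≤ t :=
    fun t ht htd => Nat.minFac_le_of_dvd ht.two_le htd
  have hqr := h _ hrp (Nat.minFac_dvd D)
  generalize D.minFac = r at *
  have hD'0 : 0 < D' := by
    rcases Nat.eq_zero_or_pos D' with h | h
    · subst h; omega
    · exact h
  have hSS := aux_SS_mul r D' hrp hD'0
    (fun t ht htd => hmin t ht (htd.trans ⟨r, by rw [hD', mul_comm]⟩))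
  rw [← hD'] at hSS
  rw [hSS]
  exact le_max_of_le_left (Nat.mul_le_mul_right _ hqr)

/-- Lemma 8.1: let `q ∈ {2,3}`, `y ≥ 3`, `x ≥ 3¹⁰`, and let `A ∈ 𝒜*(x,y)` with
`q < P(A) ≤ √x/27` and `P⁻(A) ≥ q`. Then there is a chain `A = a₁ − ⋯ − a_s` of at
least two integers of `𝒜*(x,y)` with: `P(a_j) = P(A)` for `1 ≤ j < s`; `P(a_s) = q`;
`P⁻(a_j) ≥ q` for `1 ≤ j ≤ s`; `a_{s-1} > √(x P(a_{s-1}))`;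
`P(a_{s-1}/P(a_{s-1})) ≤ √(x/P(a_{s-1}))/27`; and `a_s > 3√x`. -/
theorem stmt_12 (q : ℕ) (hq : q = 2 ∨ q = 3) (x y : ℝ) (hy : 3 ≤ y) (hx : (3 : ℝ) ^ 10 ≤ x)
    (A : ℕ) (hA : AstarMem x y A) (hqA : q < Pmax A)
    (hPA : (Pmax A : ℝ) ≤ Real.sqrt x / 27)
    (hminA : ∀ r : ℕ, r.Prime → r ∣ A → q ≤ r) :
    ∃ s : ℕ, ∃ a : ℕ → ℕ, 2 ≤ s ∧ a 1 = A ∧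
      (∀ i j, 1 ≤ i → i ≤ s → 1 ≤ j → j ≤ s → i ≠ j → a i ≠ a j) ∧
      (∀ i, 1 ≤ i → i < s → (a i ∣ a (i + 1) ∨ a (i + 1) ∣ a i)) ∧
      (∀ i, 1 ≤ i → i ≤ s → AstarMem x y (a i)) ∧
      (∀ j, 1 ≤ j → j < s → Pmax (a j) = Pmax A) ∧
      Pmax (a s) = q ∧
      (∀ j, 1 ≤ j → j ≤ s → ∀ r : ℕ, r.Prime → r ∣ a j → q ≤ r) ∧
      Real.sqrt (x * (Pmax (a (s - 1)) : ℝ)) < (a (s - 1) : ℝ) ∧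
      (Pmax (a (s - 1) / Pmax (a (s - 1))) : ℝ) ≤ Real.sqrt (x / (Pmax (a (s - 1)) : ℝ)) / 27 ∧
      3 * Real.sqrt x < (a s : ℝ) := by
  obtain ⟨hA1, hA2, hA3, hA4⟩ := id hA
  have hqP : q.Prime := by rcases hq with rfl | rfl <;> norm_num
  have hq3 : q ≤ 3 := by omega
  have hq3' : (q : ℝ) ≤ 3 := by exact_mod_cast hq3
  have hq1 : (1 : ℝ) < q := by exact_mod_cast hqP.one_lt
  obtain ⟨-, hp, hpA, hle⟩ := aux_Pmax_spec A (lt_trans hqP.one_lt hqA)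
  have hAself : Pmax A = Pmax A := rfl
  generalize hpdef : Pmax A = p at *
  have hx0 : (0 : ℝ) < x := lt_of_lt_of_le (by norm_num) hx
  have hs : (243 : ℝ) ≤ Real.sqrt x := by
    apply Real.le_sqrt_of_sq_le
    norm_num at hx ⊢
    exact hx
  have hss : Real.sqrt x * Real.sqrt x = x := Real.mul_self_sqrt hx0.le
  have hp0 : (1 : ℝ) < p := by exact_mod_cast hp.one_lt
  have hpp : ∀ r : ℕ, r.Prime → r ∣ p → q ≤ r ∧ r ≤ p := by
    intro r hr hrp
    have := (Nat.prime_dvd_prime_iff_eq hr hp).1 hrp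
    omega
  have hSp : (SS p : ℝ) ≤ x := by
    have h1 := aux_SS_mul p 1 hp one_pos
      (fun t ht htd => absurd (Nat.dvd_one.1 htd) ht.one_lt.ne')
    have h2 : SS 1 = 1 := by simp [SS]
    rw [mul_one, h2] at h1
    rw [h1, Nat.cast_max]
    apply max_le
    · push_cast
      nlinarith
    · push_cast
      nlinarith
  have hHp : AuxH x p q p := ⟨hp.pos, dvd_rfl, hpp, hSp⟩
  obtain ⟨e, -, he1, he2⟩ := aux_max x q p 0 hqP hp.pos (by
    norm_num
    nlinarith)
  have hbig : 3 * Real.sqrt x < (q : ℝ) ^ e := by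
    apply aux_big x q p _ hx0 (by positivity) hq3' (by positivity) (by positivity) hPA
    calc x < _ := he2
      _ = _ := by ring
  have hqe1 : (1 : ℝ) < (q : ℝ) ^ e := by linarith
  have hpe : Real.sqrt x < (q : ℝ) ^ e * p := by nlinarith
  have hgood := aux_good x y p q p e hp hqP hqA hA3 hHp hpe he1
  have hA1' : 1 < A := by
    have : (1 : ℝ) < A := by linarith
    exact_mod_cast this
  have hHA : AuxH x p q A := ⟨hA1, hpA, fun r hr hrA => ⟨hminA r hr hrA, hle r hr hrA⟩, hA4⟩
  have hreach := aux_main x y p q e hx0 hp hqP hq3 hqA hA3 he2 hgood A hHA 0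
    (by simpa using hA2) (by
      refine le_trans ?_ hA4
      have := aux_SS_ge A q hA1' hminA
      norm_num
      exact_mod_cast this)
  rw [pow_zero, one_mul] at hreach
  obtain ⟨w, hw⟩ := hreach.exists_isPath
  have hgoodA : AuxGood x y p q A := ⟨hA, hpdef, hminA⟩
  have hwg : ∀ i, AuxGood x y p q (w.getVert i) := by
    intro i
    rcases Nat.lt_or_ge i w.length with h | h
    · exact (w.adj_getVert_succ h).2.1
    · rw [w.getVert_of_length_le h]
      exact hgood
  have he0 : e ≠ 0 := by
    rintro rfl
    simp at hqe1
  have hqpos : 0 < q ^ e := by have := hqP.pos; positivity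
  have hqall : ∀ r : ℕ, r.Prime → r ∣ q ^ e → r = q := fun r hr hrd =>
    (Nat.prime_dvd_prime_iff_eq hr hqP).1 (hr.dvd_of_dvd_pow hrd)
  have hPq : Pmax (q ^ e) = q :=
    aux_Pmax_eq _ _ hqpos hqP (dvd_pow_self q he0) (fun t ht htd => (hqall t ht htd).le)
  have hqA' : AstarMem x y (q ^ e) := by
    refine ⟨hqpos, by push_cast; linarith, ?_, ?_⟩
    · rw [hPq]
      apply le_min
      · linarith
      · linarith
    · have h2 : SS 1 = 1 := by simp [SS]
      have := aux_SS_pow q 1 e x hqP one_pos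
        (fun t ht htd => absurd (Nat.dvd_one.1 htd) ht.one_lt.ne')
        (by rw [h2]; push_cast; nlinarith) (by
          refine le_trans ?_ he1
          push_cast
          gcongr)
      rwa [mul_one] at this
  have hne : ∀ i, w.getVert i ≠ q ^ e := by
    intro i h
    have h1 := (hwg i).2.1
    rw [h, hPq] at h1
    omega
  obtain ⟨a, ha1, ha2⟩ : ∃ a : ℕ → ℕ, (∀ i, i ≤ w.length + 1 → a i = w.getVert (i - 1)) ∧
      a (w.length + 2) = q ^ e :=
    ⟨fun i => if i ≤ w.length + 1 then w.getVert (i - 1) else q ^ e,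
      fun i hi => if_pos hi, if_neg (by omega)⟩
  have hlast : a (w.length + 1) = q ^ e * p := by
    rw [ha1 _ le_rfl, Nat.add_sub_cancel, w.getVert_length]
  have hcases : ∀ i, i ≤ w.length + 2 → i ≤ w.length + 1 ∨ i = w.length + 2 := by
    intro i hi
    omega
  have hPl : Pmax (q ^ e * p) = p := hgood.2.1
  refine ⟨w.length + 2, a, by omega, ?_, ?_, ?_, ?_, ?_, ?_, ?_, ?_, ?_, ?_⟩
  · rw [ha1 1 (by omega)]
    simp
  · intro i j hi1 hi2 hj1 hj2 hij
    rcases hcases i hi2 with hi | hi <;> rcases hcases j hj2 with hj | hj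
    · rw [ha1 i hi, ha1 j hj]
      intro h
      have := hw.getVert_injOn (show i - 1 ≤ w.length by omega)
        (show j - 1 ≤ w.length by omega) h
      omega
    · rw [ha1 i hi, hj, ha2]
      exact hne _
    · rw [ha1 j hj, hi, ha2]
      exact (hne _).symm
    · omega
  · intro i hi1 hi2
    by_cases hi : i = w.length + 1
    · rw [hi, hlast, ha2]
      exact Or.inr (Dvd.intro _ rfl)
    · rw [ha1 i (by omega), ha1 (i + 1) (by omega)]
      have h := (w.adj_getVert_succ (i := i - 1) (by omega)).2.2.2
      rwa [Nat.sub_add_cancel hi1] at h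
  · intro i hi1 hi2
    rcases hcases i hi2 with hi | hi
    · rw [ha1 i hi]
      exact (hwg _).1
    · rw [hi, ha2]
      exact hqA'
  · intro j hj1 hj2
    rw [ha1 j (by omega)]
    exact (hwg _).2.1
  · rw [ha2]
    exact hPq
  · intro i hi1 hi2
    rcases hcases i hi2 with hi | hi
    · rw [ha1 i hi]
      exact (hwg _).2.2
    · rw [hi, ha2]
      intro r hr hrd
      exact (hqall r hr hrd).ge
  · rw [show w.length + 2 - 1 = w.length + 1 by omega, hlast, hPl]
    rw [Real.sqrt_lt' (by push_cast; positivity)]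
    push_cast
    have h1 : (3 * Real.sqrt x) ^ 2 < ((q : ℝ) ^ e) ^ 2 := by gcongr
    have h2 : x < ((q : ℝ) ^ e) ^ 2 := by nlinarith
    calc x * p < ((q : ℝ) ^ e) ^ 2 * p := by gcongr
      _ ≤ ((q : ℝ) ^ e) ^ 2 * (p * p) := by
        gcongr
        nlinarith
      _ = _ := by ring
  · rw [show w.length + 2 - 1 = w.length + 1 by omega, hlast, hPl,
      Nat.mul_div_cancel _ hp.pos, hPq, le_div_iff₀ (by norm_num)]
    apply Real.le_sqrt_of_sq_le
    rw [le_div_iff₀ (by linarith)]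
    have h1 : ((q : ℝ) * 27) ^ 2 ≤ (3 * 27) ^ 2 := by gcongr
    nlinarith
  · rw [ha2]
    push_cast
    exact hbig
end

section
/- For all real numbers x ≥ 3^{10} and y, and every integer A of 𝒜*(x,y) with P(A) > 3, there exists a chain A = a₁ − a₂ − ⋯ − a_s of integers of 𝒜*(x,y) such that P(a_j) = P(A) for all 1 ≤ j < s, and P(a_s) = 3. -/
/-- A divisor-based criterion equivalent to `SS n ≤ x`. -/
def SSok (x : ℝ) (n : ℕ) : Prop := ∀ d, d ∣ n → 1 < d → ((d * d.minFac : ℕ) : ℝ) ≤ x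

theorem le_foldr_max (l : List ℕ) (a : ℕ) (h : a ∈ l) : a ≤ l.foldr max 1 := by
  induction l with
  | nil => simp at h
  | cons b l ih =>
    simp only [List.foldr_cons, le_max_iff]
    rcases List.mem_cons.1 h with h | h
    · left; exact h.le
    · right; exact ih h

theorem foldr_max_le (l : List ℕ) (x : ℝ) (h1 : 1 ≤ x) (h : ∀ a ∈ l, (a : ℝ) ≤ x) :
    ((l.foldr max 1 : ℕ) : ℝ) ≤ x := by
  induction l with
  | nil => simpa using h1
  | cons b l ih =>
    simp only [List.foldr_cons, Nat.cast_max, max_le_iff]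
    exact ⟨h b (by simp), ih (fun a ha => h a (by simp [ha]))⟩

theorem sublist_drop_idxOf (q : ℕ) (r L : List ℕ) (h : (q :: r).Sublist L) :
    (q :: r).Sublist (L.drop (L.idxOf q)) := by
  induction L with
  | nil => simp at h
  | cons b L ih =>
    by_cases hb : b = q
    · subst hb; simpa using h
    · rw [List.idxOf_cons_ne _ hb, List.drop_succ_cons]
      apply ih
      cases h with
      | cons _ h => exact h
      | cons_cons _ h => exact absurd rfl hb

theorem SSok_of_SS (x : ℝ) (n : ℕ) (hn : n ≠ 0) (h : (SS n : ℝ) ≤ x) : SSok x n := by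
  intro d hd h1
  have hsub := Nat.primeFactorsList_sublist_of_dvd hd hn
  have hd2 : d = (d - 2) + 2 := by omega
  have hcons : d.primeFactorsList = d.minFac :: (d / d.minFac).primeFactorsList := by
    rw [hd2]; exact Nat.primeFactorsList.eq_3 _
  have hprod : d.primeFactorsList.prod = d := Nat.prod_primeFactorsList (by omega)
  set L := n.primeFactorsList with hL
  rw [hcons] at hsub
  have hs := sublist_drop_idxOf _ _ _ hsub
  have hmem : d.minFac ∈ L := hsub.subset (by simp)
  have hlt : L.idxOf d.minFac < L.length := List.idxOf_lt_length_of_mem hmem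
  have hhead : (L.drop (L.idxOf d.minFac)).headI = d.minFac := by
    rw [List.drop_eq_getElem_cons hlt]
    simp
  have hdvd : d ∣ (L.drop (L.idxOf d.minFac)).prod := by
    have := hs.prod_dvd_prod
    rwa [← hcons, hprod] at this
  have hpos : 0 < (L.drop (L.idxOf d.minFac)).prod := by
    apply List.prod_pos
    intro a ha
    exact Nat.pos_of_mem_primeFactorsList (List.mem_of_mem_drop ha)
  refine le_trans ?_ h
  have hle := Nat.le_of_dvd hpos hdvd
  norm_cast
  unfold SS
  rw [← hL]
  refine le_trans ?_ (le_foldr_max _ _ (List.mem_map.2 ⟨L.idxOf d.minFac, by simpa using hlt, rfl⟩))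
  simp only [hhead]
  rw [mul_comm]
  exact Nat.mul_le_mul_left _ hle

theorem SS_of_SSok (x : ℝ) (n : ℕ) (hx : 1 ≤ x) (hn : n ≠ 0) (h : SSok x n) : (SS n : ℝ) ≤ x := by
  unfold SS
  apply foldr_max_le _ _ hx
  intro a ha
  obtain ⟨j, hj, rfl⟩ := List.mem_map.1 ha
  set L := n.primeFactorsList with hL
  have hj : j < L.length := by simpa using hj
  set D := (L.drop j).prod with hD
  have hdvd : D ∣ n := by
    have := (List.drop_sublist j L).prod_dvd_prod
    rwa [Nat.prod_primeFactorsList hn] at this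
  have hD0 : D ≠ 0 := fun h0 => hn (by rw [h0] at hdvd; exact Nat.eq_zero_of_zero_dvd hdvd)
  have hcons := List.drop_eq_getElem_cons hj
  have hhead : (L.drop j).headI = L[j] := by rw [hcons, List.headI_cons]
  have hpr : (L[j]).Prime := Nat.prime_of_mem_primeFactorsList (List.getElem_mem hj)
  have hdD : L[j] ∣ D := by rw [hD, hcons, List.prod_cons]; exact Dvd.intro _ rfl
  have h1 : 1 < D := lt_of_lt_of_le hpr.one_lt (Nat.le_of_dvd (Nat.pos_of_ne_zero hD0) hdD)
  have hmin : D.minFac ∈ L.drop j := by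
    have hp := Nat.minFac_prime h1.ne'
    obtain ⟨b, hb, hb2⟩ := (Prime.dvd_prod_iff hp.prime).1 (Nat.minFac_dvd D)
    have hbp := Nat.prime_of_mem_primeFactorsList (List.mem_of_mem_drop hb)
    rwa [(Nat.prime_dvd_prime_iff_eq hp hbp).1 hb2]
  have hsorted : (L.drop j).Pairwise (· ≤ ·) := by
    have : L.Pairwise (· ≤ ·) := (Nat.primeFactorsList_sorted n).pairwise
    exact this.sublist (List.drop_sublist j L)
  have hle : L[j] ≤ D.minFac := by
    rw [hcons] at hmin hsorted
    rcases List.mem_cons.1 hmin with h | h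
    · exact h.ge
    · exact (List.pairwise_cons.1 hsorted).1 _ h
  refine le_trans ?_ (h D hdvd h1)
  norm_cast
  rw [hhead, mul_comm]
  exact Nat.mul_le_mul_left _ hle

theorem Pmax_eq (n p : ℕ) (hn : n ≠ 0) (hp : p.Prime) (hpn : p ∣ n)
    (h : ∀ q, q.Prime → q ∣ n → q ≤ p) : Pmax n = p := by
  have h1 : ¬ n ≤ 1 := by
    have := Nat.le_of_dvd (Nat.pos_of_ne_zero hn) hpn
    have := hp.two_le
    omega
  unfold Pmax
  rw [if_neg h1]
  apply le_antisymm
  · apply Finset.sup_le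
    intro q hq
    exact h q (Nat.prime_of_mem_primeFactors hq) (Nat.dvd_of_mem_primeFactors hq)
  · exact Finset.le_sup (f := id) (Nat.mem_primeFactors.2 ⟨hp, hpn, hn⟩)

theorem Pmax_spec_s13 (n : ℕ) (h3 : 3 < Pmax n) :
    (Pmax n).Prime ∧ Pmax n ∣ n ∧ ∀ q, q.Prime → q ∣ n → q ≤ Pmax n := by
  have h1 : ¬ n ≤ 1 := by
    intro h; simp [Pmax, h] at h3
  have he : Pmax n = n.primeFactors.sup id := by simp [Pmax, h1]
  have hne : n.primeFactors.Nonempty := Nat.nonempty_primeFactors.2 (by omega)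
  obtain ⟨p, hp, hp2⟩ := Finset.exists_mem_eq_sup _ hne id
  rw [he, hp2]
  refine ⟨Nat.prime_of_mem_primeFactors hp, Nat.dvd_of_mem_primeFactors hp, ?_⟩
  intro q hq hqn
  rw [← hp2]
  exact Finset.le_sup (f := id) (Nat.mem_primeFactors.2 ⟨hq, hqn, by omega⟩)

theorem SSok_mul (x : ℝ) (E c : ℕ) (hE : E ≠ 0) (h : SSok x E)
    (hc : c = 0 ∨ 3 * ((E * 3 ^ c : ℕ) : ℝ) ≤ x) : SSok x (E * 3 ^ c) := by
  rcases hc with rfl | hc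
  · simpa using h
  intro d hd h1
  by_cases hq : d.minFac ≤ 3
  · refine le_trans ?_ hc
    have := Nat.le_of_dvd (by positivity) hd
    rw [mul_comm]
    exact_mod_cast Nat.mul_le_mul hq this
  · apply h d _ h1
    have : Nat.Coprime d (3 ^ c) := by
      apply Nat.Coprime.pow_right
      apply Nat.Coprime.symm
      rw [Nat.Prime.coprime_iff_not_dvd Nat.prime_three]
      intro h3
      exact hq (Nat.minFac_le_of_dvd (by norm_num) h3)
    exact this.dvd_of_dvd_mul_right hd

/-- Members of `𝒜*(x,y)` with largest prime factor `p`. -/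
def GoodN (x y : ℝ) (p n : ℕ) : Prop := AstarMem x y n ∧ Pmax n = p

/-- The divisor graph on the good integers. -/
def goodG (x y : ℝ) (p : ℕ) : SimpleGraph ℕ where
  Adj a b := a ≠ b ∧ (a ∣ b ∨ b ∣ a) ∧ GoodN x y p a ∧ GoodN x y p b
  symm := ⟨fun a b ⟨h1, h2, h3, h4⟩ => ⟨h1.symm, h2.symm, h4, h3⟩⟩
  loopless := ⟨fun a h => h.1 rfl⟩

theorem reach_of_dvd (x y : ℝ) (p a b : ℕ) (ha : GoodN x y p a) (hb : GoodN x y p b)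
    (h : a ∣ b) : (goodG x y p).Reachable a b := by
  by_cases hab : a = b
  · subst hab; exact SimpleGraph.Reachable.refl _
  · exact SimpleGraph.Adj.reachable (show (goodG x y p).Adj a b from ⟨hab, Or.inl h, ha, hb⟩)

theorem good_mul (x y : ℝ) (hx : 1 ≤ x) (p E c : ℕ) (hp : p.Prime) (hp3 : 3 < p)
    (hpy : (p : ℝ) ≤ min y (Real.sqrt x / 27)) (hE : E ≠ 0) (hpE : p ∣ E)
    (hEp : ∀ q, q.Prime → q ∣ E → q ≤ p) (h : SSok x E) (hs : Real.sqrt x < E * 3 ^ c)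
    (hc : c = 0 ∨ 3 * ((E * 3 ^ c : ℕ) : ℝ) ≤ x) : GoodN x y p (E * 3 ^ c) := by
  have h0 : E * 3 ^ c ≠ 0 := by positivity
  have hP : Pmax (E * 3 ^ c) = p := by
    apply Pmax_eq _ _ h0 hp (hpE.mul_right _)
    intro q hq hqd
    rcases (Nat.Prime.dvd_mul hq).1 hqd with h | h
    · exact hEp q hq h
    · have := (Nat.prime_dvd_prime_iff_eq hq Nat.prime_three).1 (hq.dvd_of_dvd_pow h)
      omega
  refine ⟨⟨Nat.pos_of_ne_zero h0, by push_cast; exact hs, by rw [hP]; exact hpy, ?_⟩, hP⟩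
  exact SS_of_SSok x _ hx h0 (SSok_mul x E c hE h hc)

/-- `c` is minimal with `√x < E * 3 ^ c`. -/
def IsMinExp (x : ℝ) (E c : ℕ) : Prop :=
  Real.sqrt x < E * 3 ^ c ∧ ∀ k < c, (E * 3 ^ k : ℝ) ≤ Real.sqrt x

theorem exists_minExp (x : ℝ) (E : ℕ) (hE : E ≠ 0) : ∃ c, IsMinExp x E c := by
  have hex : ∃ c : ℕ, Real.sqrt x < E * 3 ^ c := by
    obtain ⟨c, hc⟩ := pow_unbounded_of_one_lt (Real.sqrt x) (by norm_num : (1 : ℝ) < 3)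
    refine ⟨c, hc.trans_le ?_⟩
    have : (1 : ℝ) ≤ E := by exact_mod_cast Nat.pos_of_ne_zero hE
    have h3 : (0 : ℝ) < 3 ^ c := by positivity
    nlinarith
  classical
  refine ⟨Nat.find hex, Nat.find_spec hex, fun k hk => ?_⟩
  exact not_lt.1 (Nat.find_min hex hk)

theorem IsMinExp.le {x : ℝ} {E c : ℕ} (h : IsMinExp x E c) :
    c = 0 ∨ (E * 3 ^ c : ℝ) ≤ 3 * Real.sqrt x := by
  rcases c with _ | c
  · left; rfl
  · right
    have := h.2 c (by omega)
    rw [pow_succ]; linarith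

/-- One step: removing a prime factor `q`. -/
theorem step (x y : ℝ) (hx : (3 : ℝ) ^ 10 ≤ x) (p q E c c_two : ℕ) (hp : p.Prime) (hp3 : 3 < p)
    (hpy : (p : ℝ) ≤ min y (Real.sqrt x / 27)) (hE : E ≠ 0) (hq0 : q ≠ 0) (hqp : q ≤ p)
    (hpE : p ∣ q * E)
    (hEp : ∀ r, r.Prime → r ∣ q * E → r ≤ p) (h : SSok x (q * E))
    (hc : IsMinExp x (q * E) c) (hc_two : IsMinExp x E c_two) :
    (goodG x y p).Reachable (q * E * 3 ^ c) (q * E * 3 ^ c_two) ∧ GoodN x y p (q * E * 3 ^ c) ∧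
      GoodN x y p (q * E * 3 ^ c_two) := by
  have hs : (3 : ℝ) ^ 5 ≤ Real.sqrt x := by
    apply Real.le_sqrt_of_sq_le
    norm_num at hx ⊢; exact hx
  have hx0 : (0 : ℝ) ≤ x := le_trans (by positivity) hx
  have hsq : Real.sqrt x * Real.sqrt x = x := Real.mul_self_sqrt hx0
  have hx1 : (1 : ℝ) ≤ x := le_trans (by norm_num) hx
  have hq1 : (1 : ℝ) ≤ q := by exact_mod_cast Nat.pos_of_ne_zero hq0
  have hqs : (q : ℝ) ≤ Real.sqrt x / 27 :=
    le_trans (by exact_mod_cast hqp) (hpy.trans (min_le_right _ _))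
  have hqE0 : q * E ≠ 0 := mul_ne_zero hq0 hE
  have hG : GoodN x y p (q * E * 3 ^ c) := by
    apply good_mul x y hx1 p _ c hp hp3 hpy hqE0 hpE hEp h (by exact_mod_cast hc.1)
    rcases hc.le with h | h
    · exact Or.inl h
    · right
      push_cast at h ⊢
      nlinarith
  have hEc0 : (0 : ℝ) ≤ E * 3 ^ c_two := by positivity
  have hG_two : GoodN x y p (q * E * 3 ^ c_two) := by
    apply good_mul x y hx1 p _ c_two hp hp3 hpy hqE0 hpE hEp h
    · have := hc_two.1
      push_cast
      nlinarith
    · rcases hc_two.le with h | h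
      · exact Or.inl h
      · right
        have h2 : (q : ℝ) * (E * 3 ^ c_two) ≤ Real.sqrt x / 27 * (3 * Real.sqrt x) :=
          mul_le_mul hqs h hEc0 (by positivity)
        push_cast
        nlinarith
  refine ⟨reach_of_dvd x y p _ _ hG hG_two ?_, hG, hG_two⟩
  apply Nat.mul_dvd_mul_left
  apply pow_dvd_pow
  by_contra hlt
  have h1 := hc.2 c_two (by omega)
  have h2 := hc_two.1
  push_cast at h1
  nlinarith

theorem reach_all (x y : ℝ) (hx : (3 : ℝ) ^ 10 ≤ x) (p c1 : ℕ) (hp : p.Prime) (hp3 : 3 < p)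
    (hpy : (p : ℝ) ≤ min y (Real.sqrt x / 27)) (hc1 : IsMinExp x 1 c1) (B : ℕ) :
    B ≠ 0 → (∀ r, r.Prime → r ∣ p * B → r ≤ p) → SSok x (p * B) → ∀ c, IsMinExp x (p * B) c →
    (goodG x y p).Reachable (p * B * 3 ^ c) (p * 3 ^ c1) := by
  induction B using induction_on_primes with
  | zero => intro h; exact absurd rfl h
  | one =>
    intro _ hr hS c hc
    have := (step x y hx p p 1 c c1 hp hp3 hpy one_ne_zero hp.ne_zero le_rfl (by simp)
      hr hS (by exact_mod_cast hc) hc1).1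
    simpa using this
  | prime_mul q B hq ih =>
    intro hB hr hS c hc
    have hB0 : B ≠ 0 := right_ne_zero_of_mul hB
    have he : p * (q * B) = q * (p * B) := by ring
    have hpB : p * B ≠ 0 := mul_ne_zero hp.ne_zero hB0
    obtain ⟨c_two, hc_two⟩ := exists_minExp x (p * B) hpB
    rw [he] at hr hS hc ⊢
    have hdv : p * B ∣ q * (p * B) := Dvd.intro_left _ rfl
    have hr_two : ∀ r, r.Prime → r ∣ p * B → r ≤ p := fun r h1 h2 => hr r h1 (h2.trans hdv)
    have hS_two : SSok x (p * B) := fun d hd => hS d (hd.trans hdv)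
    obtain ⟨h1, -, h3⟩ := step x y hx p q (p * B) c c_two hp hp3 hpy hpB hq.ne_zero
      (hr q hq (by simp)) ((Dvd.intro _ rfl : p ∣ p * B).trans hdv) hr hS hc hc_two
    obtain ⟨c_three, hc_three⟩ := exists_minExp x B hB0
    obtain ⟨-, h4, -⟩ := step x y hx p p B c_two c_three hp hp3 hpy hB0 hp.ne_zero
      le_rfl (by simp) hr_two hS_two hc_two hc_three
    have h5 := reach_of_dvd x y p _ _ h4 h3 (Nat.mul_dvd_mul_right hdv _)
    exact h1.trans (h5.symm.trans (ih hB0 hr_two hS_two c_two hc_two))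

/-- Lemma 8.2: for `x ≥ 3¹⁰`, any `y`, and any `A ∈ 𝒜*(x,y)` with `P(A) > 3`, there is
a chain `A = a₁ − ⋯ − a_s` of integers of `𝒜*(x,y)` with `P(a_j) = P(A)` for all
`1 ≤ j < s` and `P(a_s) = 3`. -/
theorem stmt_13 (x y : ℝ) (hx : (3 : ℝ) ^ 10 ≤ x) (A : ℕ) (hA : AstarMem x y A)
    (hPA : 3 < Pmax A) :
    ∃ s : ℕ, ∃ a : ℕ → ℕ, 1 ≤ s ∧ a 1 = A ∧
      (∀ i j, 1 ≤ i → i ≤ s → 1 ≤ j → j ≤ s → i ≠ j → a i ≠ a j) ∧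
      (∀ i, 1 ≤ i → i < s → (a i ∣ a (i + 1) ∨ a (i + 1) ∣ a i)) ∧
      (∀ i, 1 ≤ i → i ≤ s → AstarMem x y (a i)) ∧
      (∀ j, 1 ≤ j → j < s → Pmax (a j) = Pmax A) ∧
      Pmax (a s) = 3 := by
  obtain ⟨hp, hpA, hmax⟩ := Pmax_spec_s13 A hPA
  obtain ⟨hA1, hA2, hA3, hA4⟩ := id hA
  set p := Pmax A with hpdef
  have hA0 : A ≠ 0 := by omega
  have hx1 : (1 : ℝ) ≤ x := le_trans (by norm_num) hx
  have hS : SSok x A := SSok_of_SS x A hA0 hA4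
  obtain ⟨B, hB⟩ := hpA
  have hB0 : B ≠ 0 := by rintro rfl; simp at hB; omega
  obtain ⟨c1, hc1⟩ := exists_minExp x 1 one_ne_zero
  have hc10 : c1 ≠ 0 := by
    rintro rfl
    have h1 := hc1.1
    have : (1 : ℝ) ≤ Real.sqrt x := Real.one_le_sqrt.2 hx1
    norm_num at h1
    linarith
  have hSp : SSok x (p * 1) := fun d hd =>
    hS d (hd.trans (by rw [hB]; simp))
  obtain ⟨c, hc⟩ := exists_minExp x (p * 1) (by simpa using hp.ne_zero)
  have hM : GoodN x y p (p * 3 ^ c1) := by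
    have := (step x y hx p p 1 c c1 hp hPA hA3 one_ne_zero hp.ne_zero le_rfl (by simp)
      (fun r hr hrp => Nat.le_of_dvd hp.pos (by simpa using hrp)) hSp hc hc1).2.2
    simpa using this
  have hreach : (goodG x y p).Reachable A (p * 3 ^ c1) := by
    have hAc : IsMinExp x (p * B) 0 := by
      rw [← hB]
      exact ⟨by simpa using hA2, fun k hk => absurd hk (by omega)⟩
    have := reach_all x y hx p c1 hp hPA hA3 hc1 B hB0 (by rw [← hB]; exact hmax)
      (by rw [← hB]; exact hS) 0 hAc
    rw [← hB] at this
    simpa using this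
  have hPT : Pmax (3 ^ c1) = 3 := by
    apply Pmax_eq _ _ (by positivity) Nat.prime_three (dvd_pow_self 3 hc10)
    intro q hq hqd
    exact ((Nat.prime_dvd_prime_iff_eq hq Nat.prime_three).1 (hq.dvd_of_dvd_pow hqd)).le
  have hT : AstarMem x y (3 ^ c1) := by
    refine ⟨Nat.pos_of_ne_zero (by positivity), by simpa using hc1.1, ?_, ?_⟩
    · rw [hPT]
      exact le_trans (by exact_mod_cast hPA.le) hA3
    · apply SS_of_SSok x _ hx1 (by positivity)
      have h1 := SSok_of_SS x _ (by have := hM.1.1; omega) hM.1.2.2.2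
      exact fun d hd => h1 d (hd.mul_left _)
  obtain ⟨w, hw⟩ := hreach.exists_isPath
  have hgood : ∀ i, GoodN x y p (w.getVert i) := by
    intro i
    rcases Nat.lt_or_ge i w.length with hi | hi
    · exact (w.adj_getVert_succ hi).2.2.1
    · rw [w.getVert_of_length_le hi]; exact hM
  have hne : ∀ i, w.getVert i ≠ 3 ^ c1 := by
    intro i h
    have := (hgood i).2
    rw [h, hPT] at this
    omega
  refine ⟨w.length + 2, fun i => if i ≤ w.length + 1 then w.getVert (i - 1) else 3 ^ c1,
    by omega, by simp, ?_, ?_, ?_, ?_, by simpa using hPT⟩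
  · intro i j hi1 hi2 hj1 hj2 hij
    dsimp only
    split_ifs with h1 h2 h2
    · intro h
      have := hw.getVert_injOn (show i - 1 ∈ {i | i ≤ w.length} by simp; omega)
        (show j - 1 ∈ {i | i ≤ w.length} by simp; omega) h
      omega
    · exact hne _
    · exact (hne _).symm
    · omega
  · intro i hi1 hi2
    dsimp only
    rw [if_pos (by omega)]
    split_ifs with h1
    · have := (w.adj_getVert_succ (i := i - 1) (by omega)).2.1
      rwa [show i - 1 + 1 = i + 1 - 1 by omega] at this
    · right
      rw [w.getVert_of_length_le (by omega)]
      simp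
  · intro i hi1 hi2
    dsimp only
    split_ifs
    · exact (hgood _).1
    · exact hT
  · intro j hj1 hj2
    dsimp only
    rw [if_pos (by omega)]
    exact (hgood _).2
end

section
/- For all real numbers x ≥ 3^{10} and y ≥ 3, and all integers A and B of 𝒜*(x,y) such that P(A) < P(B), there exists a chain formed of integers of 𝒜*(x,y) whose first term is A and whose last term is B. -/
/-- Recursive form of the Schinzel–Szekeres function on lists. -/
def SSL : List ℕ → ℕ
  | [] => 1
  | a :: l => max (a * (a * l.prod)) (SSL l)

lemma SSL_eq (l : List ℕ) :
    ((List.range l.length).map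
      (fun j => (l.drop j).headI * (l.drop j).prod)).foldr max 1 = SSL l := by
  induction l with
  | nil => rfl
  | cons a l ih =>
    rw [List.length_cons, List.range_succ_eq_map]
    simp only [List.map_cons, List.foldr_cons, List.map_map, SSL]
    rw [← ih]
    simp [Function.comp_def]

lemma SS_eq (n : ℕ) : SS n = SSL n.primeFactorsList := SSL_eq _

lemma SSL_mono {l₁ l₂ : List ℕ} (h : l₁.Sublist l₂) (h2 : ∀ a ∈ l₂, 0 < a) :
    SSL l₁ ≤ SSL l₂ := by
  induction h with
  | slnil => exact le_rfl
  | cons a h ih =>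
    exact (ih fun b hb => h2 b (List.mem_cons_of_mem _ hb)).trans (le_max_right _ _)
  | cons_cons a h ih =>
    have h3 := ih fun b hb => h2 b (List.mem_cons_of_mem _ hb)
    refine max_le_max ?_ h3
    refine Nat.mul_le_mul_left _ (Nat.mul_le_mul_left _ ?_)
    refine Nat.le_of_dvd ?_ h.prod_dvd_prod
    exact List.prod_pos fun b hb => h2 b (List.mem_cons_of_mem _ hb)

lemma SS_mono {d n : ℕ} (h : d ∣ n) (hn : n ≠ 0) : SS d ≤ SS n := by
  rw [SS_eq, SS_eq]
  exact SSL_mono (Nat.primeFactorsList_sublist_of_dvd h hn)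
    fun a ha => (Nat.prime_of_mem_primeFactorsList ha).pos

lemma SS_two_mul {n : ℕ} (hn : n ≠ 0) : SS (2 * n) = max (2 * (2 * n)) (SS n) := by
  have h : (2 * n).primeFactorsList = 2 :: n.primeFactorsList := by
    obtain ⟨k, rfl⟩ : ∃ k, n = k + 1 := ⟨n - 1, by omega⟩
    have : 2 * (k + 1) = (2 * k) + 2 := by ring
    have hm : (2 * k + 2).minFac = 2 := (Nat.minFac_eq_two_iff _).2 ⟨k + 1, by ring⟩
    rw [this, Nat.primeFactorsList, hm]
    congr 2
    omega
  rw [SS_eq, SS_eq, h, SSL, Nat.prod_primeFactorsList hn]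

lemma Pmax_le_s14 {n : ℕ} (hn : n ≠ 0) {z : ℝ} (hz : 1 ≤ z) :
    (Pmax n : ℝ) ≤ z ↔ ∀ p : ℕ, p.Prime → p ∣ n → (p : ℝ) ≤ z := by
  have hz0 : 0 ≤ z := zero_le_one.trans hz
  unfold Pmax
  split_ifs with h
  · have : n = 1 := by omega
    subst this
    simp only [Nat.cast_one, hz, true_iff]
    intro p hp h1
    exact absurd (Nat.dvd_one.1 h1) hp.one_lt.ne'
  · rw [← Nat.le_floor_iff hz0, Finset.sup_le_iff]
    constructor
    · intro H p hp hd
      exact (Nat.le_floor_iff hz0).1 (H p (Nat.mem_primeFactors.2 ⟨hp, hd, hn⟩))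
    · intro H p hp
      exact (Nat.le_floor_iff hz0).2
        (H p (Nat.prime_of_mem_primeFactors hp) (Nat.dvd_of_mem_primeFactors hp))

lemma sqrt_ge {x : ℝ} (hx : (3 : ℝ) ^ 10 ≤ x) : 243 ≤ Real.sqrt x :=
  Real.le_sqrt_of_sq_le (by norm_num at hx ⊢; exact hx)

lemma min_ge {x y : ℝ} (hx : (3 : ℝ) ^ 10 ≤ x) (hy : 3 ≤ y) :
    3 ≤ min y (Real.sqrt x / 27) := by
  have := sqrt_ge hx
  exact le_min hy (by linarith)

lemma mem_two_mul {x y : ℝ} (hx : (3 : ℝ) ^ 10 ≤ x) (hy : 3 ≤ y) {n : ℕ}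
    (h : AstarMem x y n) (h4 : 4 * (n : ℝ) ≤ x) : AstarMem x y (2 * n) := by
  obtain ⟨h1, h2, h3, h5⟩ := h
  have hz := min_ge hx hy
  have hn : n ≠ 0 := by omega
  refine ⟨by omega, ?_, ?_, ?_⟩
  · push_cast
    have : (1 : ℝ) ≤ n := by exact_mod_cast h1
    linarith
  · rw [Pmax_le_s14 (by omega) (by linarith)]
    rw [Pmax_le_s14 hn (by linarith)] at h3
    intro p hp hd
    rcases (Nat.Prime.dvd_mul hp).1 hd with h | h
    · have : p ≤ 2 := Nat.le_of_dvd (by norm_num) h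
      have : (p : ℝ) ≤ 2 := by exact_mod_cast this
      linarith
    · exact h3 p hp h
  · rw [SS_two_mul hn]
    push_cast
    exact max_le (by linarith) h5

lemma mem_of_dvd {x y : ℝ} (hx : (3 : ℝ) ^ 10 ≤ x) (hy : 3 ≤ y) {d n : ℕ}
    (h : AstarMem x y n) (hd : d ∣ n) (h4 : Real.sqrt x < d) : AstarMem x y d := by
  obtain ⟨h1, h2, h3, h5⟩ := h
  have hz := min_ge hx hy
  have hn : n ≠ 0 := by omega
  have hd0 : d ≠ 0 := by rintro rfl; simp at hd; omega
  refine ⟨by omega, h4, ?_, ?_⟩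
  · rw [Pmax_le_s14 hd0 (by linarith)]
    rw [Pmax_le_s14 hn (by linarith)] at h3
    exact fun p hp hpd => h3 p hp (hpd.trans hd)
  · exact le_trans (by exact_mod_cast SS_mono hd hn) h5

/-- The divisor graph induced on `𝒜*(x,y)`. -/
def AG (x y : ℝ) : SimpleGraph ℕ where
  Adj a b := a ≠ b ∧ AstarMem x y a ∧ AstarMem x y b ∧ (a ∣ b ∨ b ∣ a)
  symm := ⟨fun _ _ h => ⟨h.1.symm, h.2.2.1, h.2.1, h.2.2.2.symm⟩⟩
  loopless := ⟨fun _ h => h.1 rfl⟩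

lemma reach_dvd {x y : ℝ} {a b : ℕ} (ha : AstarMem x y a) (hb : AstarMem x y b)
    (h : a ∣ b) : (AG x y).Reachable a b := by
  by_cases e : a = b
  · subst e; rfl
  · exact SimpleGraph.Adj.reachable ⟨e, ha, hb, Or.inl h⟩

lemma top {x y : ℝ} (hx : (3 : ℝ) ^ 10 ≤ x) (hy : 3 ≤ y) :
    ∀ t n : ℕ, x < t + n → AstarMem x y n →
      ∃ j, AstarMem x y (2 ^ j * n) ∧ x < 4 * ((2 ^ j * n : ℕ) : ℝ) := by
  intro t
  induction t with
  | zero =>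
    intro n h hm
    have : (0 : ℝ) ≤ n := Nat.cast_nonneg n
    refine ⟨0, by simpa using hm, ?_⟩
    simp at h ⊢
    linarith
  | succ t ih =>
    intro n h hm
    by_cases h4 : 4 * (n : ℝ) ≤ x
    · have h1 : (1 : ℝ) ≤ n := by exact_mod_cast hm.1
      push_cast at h
      obtain ⟨j, h5, h6⟩ := ih (2 * n) (by push_cast; linarith) (mem_two_mul hx hy hm h4)
      have e : 2 ^ j * (2 * n) = 2 ^ (j + 1) * n := by ring
      rw [e] at h5 h6
      exact ⟨j + 1, h5, h6⟩
    · exact ⟨0, by simpa using hm, by simpa using h4⟩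

lemma reach_pow {x y : ℝ} (hx : (3 : ℝ) ^ 10 ≤ x) (hy : 3 ≤ y) :
    ∀ m k : ℕ, AstarMem x y (2 ^ k * m) →
      ∃ a, AstarMem x y (2 ^ a) ∧ (AG x y).Reachable (2 ^ k * m) (2 ^ a) := by
  intro m
  induction m using Nat.strong_induction_on with
  | _ m ih =>
    intro k hm
    by_cases h1 : m = 1
    · subst h1
      rw [mul_one] at hm ⊢
      exact ⟨k, hm, by rfl⟩
    obtain ⟨t, ht⟩ := exists_nat_gt x
    obtain ⟨j, hj, hj4⟩ := top hx hy t (2 ^ k * m)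
      (by have : (0 : ℝ) ≤ ((2 ^ k * m : ℕ) : ℝ) := Nat.cast_nonneg _
          linarith) hm
    have hm0 : m ≠ 0 := by
      rintro rfl
      have := hm.1
      simp at this
    obtain ⟨p, hp, m', rfl⟩ := Nat.exists_prime_and_dvd h1
    have hm' : 0 < m' := Nat.pos_of_ne_zero (by rintro rfl; simp at hm0)
    have hlt : m' < p * m' := by nlinarith [hp.two_le]
    have hdv : 2 ^ (j + k) * m' ∣ 2 ^ j * (2 ^ k * (p * m')) := ⟨p, by ring⟩
    have hpz : (p : ℝ) ≤ Real.sqrt x / 27 := by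
      have h3 := hm.2.2.1
      rw [Pmax_le_s14 (by have := hm.1; omega) (by linarith [min_ge hx hy])] at h3
      exact (h3 p hp (Dvd.intro_left (2 ^ k * m') (by ring))).trans (min_le_right _ _)
    have hs := sqrt_ge hx
    have hss : Real.sqrt x * Real.sqrt x = x := Real.mul_self_sqrt (by norm_num at hx; linarith)
    have hbig : Real.sqrt x < ((2 ^ (j + k) * m' : ℕ) : ℝ) := by
      have e : ((2 ^ j * (2 ^ k * (p * m')) : ℕ) : ℝ) = p * ((2 ^ (j + k) * m' : ℕ) : ℝ) := by
        push_cast; ring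
      rw [e] at hj4
      have hN : (0 : ℝ) ≤ ((2 ^ (j + k) * m' : ℕ) : ℝ) := Nat.cast_nonneg _
      have := mul_le_mul_of_nonneg_right hpz hN
      by_contra hc
      push Not at hc
      nlinarith
    have hmem := mem_of_dvd hx hy hj hdv hbig
    obtain ⟨a, ha, hr⟩ := ih m' hlt (j + k) hmem
    refine ⟨a, ha, ?_⟩
    exact ((reach_dvd hm hj (Dvd.intro_left _ rfl)).trans (reach_dvd hmem hj hdv).symm).trans hr

lemma support_mem {x y : ℝ} {a b : ℕ} (w : (AG x y).Walk a b) (ha : AstarMem x y a) :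
    ∀ n ∈ w.support, AstarMem x y n := by
  induction w with
  | nil => simpa using ha
  | cons h w ih =>
    intro n hn
    rw [SimpleGraph.Walk.support_cons, List.mem_cons] at hn
    rcases hn with rfl | hn
    · exact ha
    · exact ih h.2.2.1 n hn

/-- Lemma 8.3: for `x ≥ 3¹⁰`, `y ≥ 3`, and `A, B ∈ 𝒜*(x,y)` with `P(A) < P(B)`,
there is a chain of integers of `𝒜*(x,y)` whose first term is `A` and whose last
term is `B`. -/
theorem stmt_14 (x y : ℝ) (hx : (3 : ℝ) ^ 10 ≤ x) (hy : 3 ≤ y) (A B : ℕ)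
    (hA : AstarMem x y A) (hB : AstarMem x y B) (hAB : Pmax A < Pmax B) :
    ∃ l : List ℕ, IsDivChain l ∧ (∀ n ∈ l, AstarMem x y n) ∧
      l.head? = some A ∧ l.getLast? = some B := by
  obtain ⟨a, ha, hra⟩ := reach_pow hx hy A 0 (by simpa using hA)
  obtain ⟨b, hb, hrb⟩ := reach_pow hx hy B 0 (by simpa using hB)
  rw [pow_zero, one_mul] at hra hrb
  have hab : (AG x y).Reachable (2 ^ a) (2 ^ b) := by
    rcases le_total a b with h | h
    · exact reach_dvd ha hb (pow_dvd_pow 2 h)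
    · exact (reach_dvd hb ha (pow_dvd_pow 2 h)).symm
  obtain ⟨w, hw⟩ := ((hra.trans hab).trans hrb.symm).exists_isPath
  have hmem := support_mem w hA
  refine ⟨w.support, ⟨hw.support_nodup, fun n hn => (hmem n hn).1, ?_⟩, hmem, ?_, ?_⟩
  · exact w.isChain_adj_support.imp fun _ _ h => h.2.2.2
  · rw [List.head?_eq_some_head w.support_ne_nil, w.head_support]
  · rw [List.getLast?_eq_some_getLast w.support_ne_nil, w.getLast_support]
end

section
/- For every real x ≥ 3^8, there exist two integers A and B of 𝒜*(x,3) such that P(A) = 2 and P(B) = 3. -/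
theorem foldr_max_le_aux (l : List ℕ) (M : ℕ) (h1 : 1 ≤ M) (h : ∀ a ∈ l, a ≤ M) :
    l.foldr max 1 ≤ M := by
  induction l with
  | nil => simpa using h1
  | cons a t ih =>
    simp only [List.foldr_cons]
    exact max_le (h a (by simp)) (ih (fun b hb => h b (by simp [hb])))

theorem SS_prime_pow_le (p k : ℕ) (hp : p.Prime) : SS (p ^ k) ≤ p * p ^ k := by
  unfold SS
  rw [hp.primeFactorsList_pow]
  apply foldr_max_le_aux
  · exact Nat.mul_pos hp.pos (pow_pos hp.pos k)
  · intro a ha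
    simp only [List.mem_map, List.mem_range, List.length_replicate, List.drop_replicate,
      List.prod_replicate] at ha
    obtain ⟨j, hj, rfl⟩ := ha
    have h1 : (List.replicate (k - j) p).headI = p := by
      obtain ⟨m, hm⟩ : ∃ m, k - j = m + 1 := ⟨k - j - 1, by omega⟩
      rw [hm]; rfl
    rw [h1]
    exact Nat.mul_le_mul_left _ (Nat.pow_le_pow_right hp.pos (Nat.sub_le _ _))

theorem Pmax_prime_pow (p k : ℕ) (hp : p.Prime) : Pmax (p ^ (k + 1)) = p := by
  unfold Pmax
  have h : 1 < p ^ (k + 1) := Nat.one_lt_pow (by omega) hp.one_lt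
  rw [if_neg (by omega), Nat.primeFactors_prime_pow (by omega) hp]
  simp

theorem exists_prime_pow_aux (x : ℝ) (hx : (3 : ℝ) ^ 8 ≤ x) (p : ℕ) (hp : p.Prime)
    (hp3 : p ≤ 3) : ∃ A : ℕ, AstarMem x 3 A ∧ Pmax A = p := by
  have hs : (81 : ℝ) ≤ Real.sqrt x := by
    apply Real.le_sqrt_of_sq_le
    norm_num at hx ⊢
    exact hx
  have hss : Real.sqrt x * Real.sqrt x = x := Real.mul_self_sqrt (by norm_num at hx; linarith)
  have hp1 : (1 : ℝ) < p := by exact_mod_cast hp.one_lt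
  have hp3' : (p : ℝ) ≤ 3 := by exact_mod_cast hp3
  obtain ⟨n, hn1, hn2⟩ := exists_nat_pow_near (by linarith : (1 : ℝ) ≤ Real.sqrt x) hp1
  refine ⟨p ^ (n + 1), ⟨pow_pos hp.pos _, by exact_mod_cast hn2, ?_, ?_⟩, Pmax_prime_pow p n hp⟩
  · rw [Pmax_prime_pow p n hp]
    exact le_min hp3' (by linarith)
  · have h : (SS (p ^ (n + 1)) : ℝ) ≤ p * p ^ (n + 1) := by
      exact_mod_cast SS_prime_pow_le p (n + 1) hp
    have h9 : (p : ℝ) * p ≤ 9 := by nlinarith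
    calc (SS (p ^ (n + 1)) : ℝ) ≤ p * p ^ (n + 1) := h
      _ = (p * p) * p ^ n := by ring
      _ ≤ 9 * Real.sqrt x := by gcongr
      _ ≤ Real.sqrt x * Real.sqrt x := by gcongr; linarith
      _ = x := hss

/-- Lemma 8.4: for every real `x ≥ 3⁸`, there exist `A, B ∈ 𝒜*(x,3)` with
`P(A) = 2` and `P(B) = 3`. -/
theorem stmt_15 (x : ℝ) (hx : (3 : ℝ) ^ 8 ≤ x) :
    ∃ A B : ℕ, AstarMem x 3 A ∧ AstarMem x 3 B ∧ Pmax A = 2 ∧ Pmax B = 3 := by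
  obtain ⟨A, hA, hA2⟩ := exists_prime_pow_aux x hx 2 Nat.prime_two (by norm_num)
  obtain ⟨B, hB, hB2⟩ := exists_prime_pow_aux x hx 3 Nat.prime_three (by norm_num)
  exact ⟨A, B, hA, hB, hA2, hB2⟩
end

section
/- For all real x ≥ 2, one has A(x) ≥ D(x/2, 2) and A'(x) ≥ D'(x/2, 2). -/
/-- `maxRatio n` is the maximum ratio of consecutive divisors of `n`
(with the convention that it equals `1` for `n = 1`). -/
noncomputable def maxRatio (n : ℕ) : ℝ :=
  (((n.divisors.sort (· ≤ ·)).zip (n.divisors.sort (· ≤ ·)).tail).map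
    (fun p => (p.2 : ℝ) / (p.1 : ℝ))).foldr max 1

/-- `Acard x = #{n ≥ 1 : S(n) ≤ x}`. -/
noncomputable def Acard (x : ℝ) : ℕ := {n : ℕ | 1 ≤ n ∧ (SS n : ℝ) ≤ x}.ncard

/-- `A'card x = #{n ≥ 1 : S(n) ≤ x and n squarefree}`. -/
noncomputable def A'card (x : ℝ) : ℕ :=
  {n : ℕ | 1 ≤ n ∧ (SS n : ℝ) ≤ x ∧ Squarefree n}.ncard

/-- `Dcard x t = #{n ≤ x : max_{1 ≤ i < τ(n)} d_{i+1}(n)/d_i(n) ≤ t}`. -/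
noncomputable def Dcard (x t : ℝ) : ℕ :=
  {n : ℕ | 1 ≤ n ∧ (n : ℝ) ≤ x ∧ maxRatio n ≤ t}.ncard

/-- `D'card x t = #{n ≤ x : max_{1 ≤ i < τ(n)} d_{i+1}(n)/d_i(n) ≤ t and n squarefree}`. -/
noncomputable def D'card (x t : ℝ) : ℕ :=
  {n : ℕ | 1 ≤ n ∧ (n : ℝ) ≤ x ∧ maxRatio n ≤ t ∧ Squarefree n}.ncard

theorem foldr_max_le_iff_aux {α : Type*} [LinearOrder α] (l : List α) (b c : α) :
    l.foldr max b ≤ c ↔ b ≤ c ∧ ∀ a ∈ l, a ≤ c := by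
  induction l with
  | nil => simp
  | cons a l ih => simp [ih]; tauto

theorem exists_next_aux (n m : ℕ) (hn : 1 ≤ n) (h : maxRatio n ≤ 2) (hm : m ∣ n) (hmn : m < n) :
    ∃ d, d ∣ n ∧ m < d ∧ d ≤ 2 * m := by
  unfold maxRatio at h
  rw [foldr_max_le_iff_aux] at h
  have h2 := h.2
  have hs : (n.divisors.sort (· ≤ ·)).SortedLT := Finset.sortedLT_sort _
  have hmem : ∀ a, a ∈ n.divisors.sort (· ≤ ·) ↔ a ∣ n := by
    intro a
    simp [Finset.mem_sort, Nat.mem_divisors]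
    omega
  generalize n.divisors.sort (· ≤ ·) = l at *
  obtain ⟨i, hi, him⟩ := List.getElem_of_mem ((hmem m).2 hm)
  obtain ⟨k, hk, hkn⟩ := List.getElem_of_mem ((hmem n).2 dvd_rfl)
  have hmono := hs.strictMono_get
  have hik : i < k := by
    have : (⟨i, hi⟩ : Fin l.length) < ⟨k, hk⟩ := by
      rw [← hmono.lt_iff_lt]
      simp [him, hkn, hmn]
    simpa using this
  have hi1 : i + 1 < l.length := by omega
  refine ⟨l[i+1], (hmem _).1 (List.getElem_mem hi1), ?_, ?_⟩
  · have : (⟨i, hi⟩ : Fin l.length) < ⟨i+1, hi1⟩ := by simp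
    have := hmono this
    simpa [him] using this
  · have h3 : (l[i], l[i+1]) ∈ l.zip l.tail := by
      have hlen : i < (l.zip l.tail).length := by simp; omega
      have := List.getElem_mem hlen
      simpa using this
    have h4 := h2 _ (List.mem_map_of_mem h3)
    simp only [him] at h4
    have hmpos : 0 < m := Nat.pos_of_dvd_of_pos hm hn
    have hmpos' : (0 : ℝ) < m := by exact_mod_cast hmpos
    rw [div_le_iff₀ hmpos'] at h4
    exact_mod_cast h4

theorem SS_le_aux (n : ℕ) (hn : 1 ≤ n) (h : maxRatio n ≤ 2) : SS n ≤ 2 * n := by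
  unfold SS
  rw [foldr_max_le_iff_aux]
  refine ⟨by omega, ?_⟩
  intro a ha
  obtain ⟨j, hj, rfl⟩ := List.mem_map.1 ha
  rw [List.mem_range] at hj
  have hprod : (n.primeFactorsList.take j).prod * (n.primeFactorsList.drop j).prod = n := by
    rw [List.prod_take_mul_prod_drop, Nat.prod_primeFactorsList (by omega)]
  have hsort : (n.primeFactorsList.drop j).Pairwise (· ≤ ·) :=
    ((Nat.primeFactorsList_sorted n).pairwise).sublist (List.drop_sublist _ _)
  have hpr : ∀ q ∈ n.primeFactorsList.drop j, q.Prime := fun q hq =>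
    Nat.prime_of_mem_primeFactorsList (List.mem_of_mem_drop hq)
  generalize (n.primeFactorsList.take j).prod = m at *
  have hne : n.primeFactorsList.drop j ≠ [] := by simp; omega
  generalize n.primeFactorsList.drop j = t at *
  obtain _ | ⟨p, t⟩ := t
  · simp at hne
  have hge : ∀ q ∈ p :: t, p ≤ q := by
    intro q hq
    rcases List.mem_cons.1 hq with rfl | hq
    · rfl
    · exact (List.pairwise_cons.1 hsort).1 q hq
  simp only [List.headI_cons]
  generalize hd : (p :: t).prod = d at *
  have hp : p.Prime := hpr p (by simp)
  have key : p ≤ 2 * m := by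
    by_contra hlt
    push Not at hlt
    have hpd : p ∣ d := by rw [← hd]; simp
    have hdpos : 0 < d := by
      rcases Nat.eq_zero_or_pos d with h0 | h0
      · subst h0; simp at hprod; omega
      · exact h0
    have hmpos : 0 < m := by
      rcases Nat.eq_zero_or_pos m with h0 | h0
      · subst h0; simp at hprod; omega
      · exact h0
    have hd2 : 2 ≤ d := le_trans hp.two_le (Nat.le_of_dvd hdpos hpd)
    have hmn : m < n := by nlinarith
    obtain ⟨e, he, h1, h2⟩ := exists_next_aux n m hn h ⟨d, hprod.symm⟩ hmn
    have hco : Nat.Coprime e d := by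
      rw [← hd, Nat.coprime_list_prod_right_iff]
      intro q hq
      rw [Nat.coprime_comm, (hpr q hq).coprime_iff_not_dvd]
      intro hqe
      have := Nat.le_of_dvd (by omega) hqe
      have := hge q hq
      omega
    have : e ∣ m := hco.dvd_of_dvd_mul_right (hprod ▸ he)
    have := Nat.le_of_dvd hmpos this
    omega
  rw [← hprod]
  nlinarith [Nat.mul_le_mul_right d key]

theorem le_SS_aux (n : ℕ) : n ≤ SS n := by
  have h := (foldr_max_le_iff_aux _ _ _).1 (le_refl (SS n))
  rcases Nat.lt_or_ge n 2 with h0 | h0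
  · have := h.1
    omega
  have h2 := h.2
  have hprod := Nat.prod_primeFactorsList (n := n) (by omega)
  have hpr : ∀ q ∈ n.primeFactorsList, q.Prime := fun q hq => Nat.prime_of_mem_primeFactorsList hq
  generalize n.primeFactorsList = t at *
  obtain _ | ⟨p, t⟩ := t
  · simp at hprod; omega
  have h3 := h2 _ (List.mem_map_of_mem (a := 0) (by simp))
  simp only [List.drop_zero, List.headI_cons, hprod] at h3
  have := (hpr p (by simp)).pos
  nlinarith

theorem finite_SS_aux (x : ℝ) : {n : ℕ | 1 ≤ n ∧ (SS n : ℝ) ≤ x}.Finite := by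
  apply (Set.finite_Iic ⌊x⌋₊).subset
  rintro n ⟨_, hn⟩
  exact (le_SS_aux n).trans (Nat.le_floor hn)

theorem SS_le_real_aux (x : ℝ) (n : ℕ) (h1 : 1 ≤ n) (h2 : (n : ℝ) ≤ x / 2) (h3 : maxRatio n ≤ 2) :
    (SS n : ℝ) ≤ x := by
  have : (SS n : ℝ) ≤ 2 * n := by exact_mod_cast SS_le_aux n h1 h3
  linarith

/-- For all real `x ≥ 2`, one has `A(x) ≥ D(x/2, 2)` and `A'(x) ≥ D'(x/2, 2)`. -/
theorem stmt_18 (x : ℝ) (hx : 2 ≤ x) :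
    Dcard (x / 2) 2 ≤ Acard x ∧ D'card (x / 2) 2 ≤ A'card x := by
  constructor
  · apply Set.ncard_le_ncard _ (finite_SS_aux x)
    rintro n ⟨h1, h2, h3⟩
    exact ⟨h1, SS_le_real_aux x n h1 h2 h3⟩
  · apply Set.ncard_le_ncard _ ((finite_SS_aux x).subset fun n hn => ⟨hn.1, hn.2.1⟩)
    rintro n ⟨h1, h2, h3, h4⟩
    exact ⟨h1, SS_le_real_aux x n h1 h2 h3, h4⟩
end
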